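/- arXiv:2410.21976 — 2 statements merged into one kernel-verified Lean document; each statement's English description precedes it below -/
import Mathlib

section
/- Let H, H₁, H₂ be finite-dimensional Hilbert spaces, let K be an arbitrary matrix from H₁ ⊗ H₂ to H, and let p, q, s be real parameters. For A positive definite on H and B positive definite on H₂, define F(A,B) := Tr[(B^{q/2} · Tr₁(K† A^p K) · B^{q/2})^s]. Then: (1) F is jointly concave if 0 ≤ q ≤ p ≤ 1 and 0 < s ≤ 1/(p+q); (2) F is jointly convex if −1 ≤ q ≤ p ≤ 0 and s > 0; (3) F is jointly convex if −1 ≤ q ≤ 0, 1 ≤ p ≤ 2, (p,q) ≠ (1,−1), and s ≥ 1/(p+q). Here jointly concave (resp. convex) means that for all positive definite A₀, A₁ on H, positive definite B₀, B₁ on H₂, and t ∈ [0,1], F(t·A₀+(1−t)·A₁, t·B₀+(1−t)·B₁) ≥ (resp. ≤) t·F(A₀,B₀) + (1−t)·F(A₁,B₁). -/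
open scoped Kronecker ComplexOrder
open Matrix

/-- Real power of a (Hermitian, in practice positive semidefinite) matrix, defined spectrally:
positive eigenvalues are raised to the power `t`, zero (and negative) eigenvalues are sent to `0`. -/
noncomputable def matPow {n : Type*} [Fintype n] [DecidableEq n]
    (M : Matrix n n ℂ) (t : ℝ) : Matrix n n ℂ :=
  if hM : M.IsHermitian then
    (hM.eigenvectorUnitary : Matrix n n ℂ) *
      Matrix.diagonal (fun i =>
        ((if 0 < hM.eigenvalues i then (hM.eigenvalues i) ^ t else 0 : ℝ) : ℂ)) *
      (star (hM.eigenvectorUnitary : Matrix n n ℂ))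
  else 0

/-- Partial trace over the first tensor factor. -/
noncomputable def ptraceFst {m n : Type*} [Fintype m] [Fintype n]
    (M : Matrix (m × n) (m × n) ℂ) : Matrix n n ℂ :=
  Matrix.of fun j j' => ∑ i, M (i, j) (i, j')

/-- Partial trace over the second tensor factor. -/
noncomputable def ptraceSnd {m n : Type*} [Fintype m] [Fintype n]
    (M : Matrix (m × n) (m × n) ℂ) : Matrix m m ℂ :=
  Matrix.of fun i i' => ∑ j, M (i, j) (i', j)

/-- A density matrix: positive semidefinite with unit trace. -/
def IsDensity {n : Type*} [Fintype n] [DecidableEq n] (ρ : Matrix n n ℂ) : Prop :=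
  ρ.PosSemidef ∧ ρ.trace = 1

/-- The trace functional of Statement 3:
`F(A,B) = Tr[(B^{q/2} · Tr₁(K† A^p K) · B^{q/2})^s]`, where
`K` is a matrix from `H₁ ⊗ H₂` to `H`. -/
noncomputable def Ffun {m n₁ n₂ : Type*} [Fintype m] [DecidableEq m]
    [Fintype n₁] [DecidableEq n₁] [Fintype n₂] [DecidableEq n₂]
    (K : Matrix m (n₁ × n₂) ℂ) (p q s : ℝ)
    (A : Matrix m m ℂ) (B : Matrix n₂ n₂ ℂ) : ℝ :=
  (Matrix.trace (matPow
    (matPow B (q / 2) * ptraceFst (Kᴴ * matPow A p * K) * matPow B (q / 2)) s)).re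

/-!
Write `F(A, B) = Tr (Φ(A) * B ^ q) ^ s`, where `Φ(A) = ∑ i, (K i)ᴴ * A ^ p * K i` and the trace is
read as a sum over eigenvalues, hence is cyclic. Convexity and concavity are inherited by pointwise
suprema and infima and by partial minima and maxima, and all results follow from two such
variational formulas.

* The Young-type tangent inequality for `Tr X ^ s`, optimised over its base point, expresses
  `Tr (Φ(A) * G) ^ s` through `Tr Lᴴ * A ^ p * L * Z ^ β`. The latter is jointly concave or convex
  in `(A, Z)` (Lieb, Ando): in the eigenbases it is a quadratic form with kernel `a ^ p * z ^ β`, an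
  integral of kernels `x ^ 2 / (u * a + v * z)`, each handled by completing the square.
* A Hölder inequality `Tr (M * N) ^ s ≤ (s / s₁) Tr (M * G) ^ s₁ + (s / s₂) Tr (N * G⁻¹) ^ s₂`, with
  equality for a suitable `G`, and its reverse, separate `A` from `B`.

A shift of `Φ` by `ε` makes it positive definite; the general case is the limit `ε → 0`.
-/

section ConvexityPrinciples

open Filter Topology

variable {E F : Type*} [AddCommMonoid E] [Module ℝ E] [AddCommMonoid F] [Module ℝ F]
  {S : Set E} {R : Set F} {f : E → ℝ}

theorem convexOn_of_forall_exists_touching_minorant (hS : Convex ℝ S)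
    (h : ∀ x ∈ S, ∃ g : E → ℝ, ConvexOn ℝ S g ∧ (∀ y ∈ S, g y ≤ f y) ∧ f x ≤ g x) :
    ConvexOn ℝ S f := by
  refine ⟨hS, fun x hx y hy a b ha hb hab => ?_⟩
  obtain ⟨g, hg, hle, htouch⟩ := h _ (hS hx hy ha hb hab)
  calc f (a • x + b • y) ≤ g (a • x + b • y) := htouch
    _ ≤ a • g x + b • g y := hg.2 hx hy ha hb hab
    _ ≤ a • f x + b • f y := by gcongr <;> apply hle <;> assumption

theorem concaveOn_of_forall_exists_touching_majorant (hS : Convex ℝ S)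
    (h : ∀ x ∈ S, ∃ g : E → ℝ, ConcaveOn ℝ S g ∧ (∀ y ∈ S, f y ≤ g y) ∧ g x ≤ f x) :
    ConcaveOn ℝ S f := by
  rw [← neg_convexOn_iff]
  refine convexOn_of_forall_exists_touching_minorant hS fun x hx => ?_
  obtain ⟨g, hg, hle, htouch⟩ := h x hx
  exact ⟨-g, hg.neg, fun y hy => neg_le_neg (hle y hy), neg_le_neg htouch⟩

theorem convexOn_slice_left {h : E × F → ℝ} (hS : Convex ℝ S) (hh : ConvexOn ℝ (S ×ˢ R) h) {y : F}
    (hy : y ∈ R) : ConvexOn ℝ S fun x => h (x, y) :=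
  ⟨hS, fun x₀ hx₀ x₁ hx₁ a b ha hb hab => by
    simpa only [Prod.smul_mk, Prod.mk_add_mk, ← add_smul, hab, one_smul] using
      hh.2 (Set.mk_mem_prod hx₀ hy) (Set.mk_mem_prod hx₁ hy) ha hb hab⟩

theorem concaveOn_slice_left {h : E × F → ℝ} (hS : Convex ℝ S) (hh : ConcaveOn ℝ (S ×ˢ R) h)
    {y : F} (hy : y ∈ R) : ConcaveOn ℝ S fun x => h (x, y) := by
  rw [← neg_convexOn_iff]
  exact convexOn_slice_left hS hh.neg hy

theorem convexOn_slice_right {h : E × F → ℝ} (hR : Convex ℝ R) (hh : ConvexOn ℝ (S ×ˢ R) h)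
    {x : E} (hx : x ∈ S) : ConvexOn ℝ R fun y => h (x, y) :=
  ⟨hR, fun y₀ hy₀ y₁ hy₁ a b ha hb hab => by
    simpa only [Prod.smul_mk, Prod.mk_add_mk, ← add_smul, hab, one_smul] using
      hh.2 (Set.mk_mem_prod hx hy₀) (Set.mk_mem_prod hx hy₁) ha hb hab⟩

theorem concaveOn_slice_right {h : E × F → ℝ} (hR : Convex ℝ R) (hh : ConcaveOn ℝ (S ×ˢ R) h)
    {x : E} (hx : x ∈ S) : ConcaveOn ℝ R fun y => h (x, y) := by
  rw [← neg_convexOn_iff]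
  exact convexOn_slice_right hR hh.neg hx

theorem convexOn_sum {ι : Type*} [Fintype ι] {u : ι → E → ℝ} (hS : Convex ℝ S)
    (hu : ∀ i, ConvexOn ℝ S (u i)) : ConvexOn ℝ S fun x => ∑ i, u i x := by
  simpa only [Finset.sum_fn] using
    Finset.sum_induction u (ConvexOn ℝ S) (fun _ _ => .add) (convexOn_const 0 hS) fun i _ => hu i

theorem concaveOn_sum {ι : Type*} [Fintype ι] {u : ι → E → ℝ} (hS : Convex ℝ S)
    (hu : ∀ i, ConcaveOn ℝ S (u i)) : ConcaveOn ℝ S fun x => ∑ i, u i x := by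
  simpa only [Finset.sum_fn] using
    Finset.sum_induction u (ConcaveOn ℝ S) (fun _ _ => .add) (concaveOn_const 0 hS) fun i _ => hu i

theorem convexOn_prod_fst (hf : ConvexOn ℝ S f) (hR : Convex ℝ R) :
    ConvexOn ℝ (S ×ˢ R) fun P => f P.1 :=
  (hf.comp_linearMap (LinearMap.fst ℝ E F)).subset (fun _ hP => hP.1) (hf.1.prod hR)

theorem concaveOn_prod_fst (hf : ConcaveOn ℝ S f) (hR : Convex ℝ R) :
    ConcaveOn ℝ (S ×ˢ R) fun P => f P.1 :=
  (hf.comp_linearMap (LinearMap.fst ℝ E F)).subset (fun _ hP => hP.1) (hf.1.prod hR)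

theorem convexOn_prod_snd {g : F → ℝ} (hS : Convex ℝ S) (hg : ConvexOn ℝ R g) :
    ConvexOn ℝ (S ×ˢ R) fun P => g P.2 :=
  (hg.comp_linearMap (LinearMap.snd ℝ E F)).subset (fun _ hP => hP.2) (hS.prod hg.1)

theorem concaveOn_prod_snd {g : F → ℝ} (hS : Convex ℝ S) (hg : ConcaveOn ℝ R g) :
    ConcaveOn ℝ (S ×ˢ R) fun P => g P.2 :=
  (hg.comp_linearMap (LinearMap.snd ℝ E F)).subset (fun _ hP => hP.2) (hS.prod hg.1)

theorem convexOn_of_attained_partial_min {h : E × F → ℝ} (hS : Convex ℝ S)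
    (hh : ConvexOn ℝ (S ×ˢ R) h) (hle : ∀ x ∈ S, ∀ y ∈ R, f x ≤ h (x, y))
    (hatt : ∀ x ∈ S, ∃ y ∈ R, h (x, y) ≤ f x) : ConvexOn ℝ S f := by
  refine ⟨hS, fun x₀ hx₀ x₁ hx₁ a b ha hb hab => ?_⟩
  obtain ⟨y₀, hy₀, h₀⟩ := hatt x₀ hx₀
  obtain ⟨y₁, hy₁, h₁⟩ := hatt x₁ hx₁
  have hmem := hh.1 (Set.mk_mem_prod hx₀ hy₀) (Set.mk_mem_prod hx₁ hy₁) ha hb hab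
  calc f (a • x₀ + b • x₁) ≤ h (a • (x₀, y₀) + b • (x₁, y₁)) := hle _ hmem.1 _ hmem.2
    _ ≤ a • h (x₀, y₀) + b • h (x₁, y₁) :=
      hh.2 (Set.mk_mem_prod hx₀ hy₀) (Set.mk_mem_prod hx₁ hy₁) ha hb hab
    _ ≤ a • f x₀ + b • f x₁ := by gcongr

theorem concaveOn_of_attained_partial_max {h : E × F → ℝ} (hS : Convex ℝ S)
    (hh : ConcaveOn ℝ (S ×ˢ R) h) (hle : ∀ x ∈ S, ∀ y ∈ R, h (x, y) ≤ f x)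
    (hatt : ∀ x ∈ S, ∃ y ∈ R, f x ≤ h (x, y)) : ConcaveOn ℝ S f := by
  rw [← neg_convexOn_iff]
  refine convexOn_of_attained_partial_min hS hh.neg
    (fun x hx y hy => neg_le_neg (hle x hx y hy)) fun x hx => ?_
  obtain ⟨y, hy, h⟩ := hatt x hx
  exact ⟨y, hy, neg_le_neg h⟩

theorem convexOn_of_tendsto {ι : Type*} {l : Filter ι} [l.NeBot] {u : ι → E → ℝ} (hS : Convex ℝ S)
    (hu : ∀ᶠ i in l, ConvexOn ℝ S (u i)) (hlim : ∀ x ∈ S, Tendsto (u · x) l (𝓝 (f x))) :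
    ConvexOn ℝ S f := by
  refine ⟨hS, fun x hx y hy a b ha hb hab => ?_⟩
  refine le_of_tendsto_of_tendsto (hlim _ (hS hx hy ha hb hab))
    (((hlim x hx).const_smul a).add ((hlim y hy).const_smul b)) ?_
  filter_upwards [hu] with i hi using hi.2 hx hy ha hb hab

theorem concaveOn_of_tendsto {ι : Type*} {l : Filter ι} [l.NeBot] {u : ι → E → ℝ}
    (hS : Convex ℝ S) (hu : ∀ᶠ i in l, ConcaveOn ℝ S (u i))
    (hlim : ∀ x ∈ S, Tendsto (u · x) l (𝓝 (f x))) : ConcaveOn ℝ S f := by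
  rw [← neg_convexOn_iff]
  exact convexOn_of_tendsto hS (hu.mono fun _ hi => hi.neg) fun x hx => (hlim x hx).neg

end ConvexityPrinciples

section PositiveDefinitePowers

open scoped MatrixOrder

/-- The convex cone of positive definite complex matrices. -/
def posDefCone (n : Type*) : Set (Matrix n n ℂ) := {A | A.PosDef}

theorem convex_posDefCone {n : Type*} : Convex ℝ (posDefCone n) := by
  refine convex_iff_forall_pos.mpr fun A hA B hB a b ha hb _ => ?_
  exact (PosDef.smul hA ha).add (PosDef.smul hB hb)

variable {n : Type*} [Fintype n] [DecidableEq n] {A B : Matrix n n ℂ}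

theorem posDef_rpow (hA : A.PosDef) (t : ℝ) : (A ^ t).PosDef := by
  rw [← isStrictlyPositive_iff_posDef] at hA ⊢
  exact hA.rpow A t

theorem rpow_mul_rpow (hA : A.PosDef) (s t : ℝ) : A ^ s * A ^ t = A ^ (s + t) :=
  (CFC.rpow_add hA.isUnit).symm

theorem rpow_zero_of_posDef (hA : A.PosDef) : A ^ (0 : ℝ) = 1 :=
  CFC.rpow_zero A hA.posSemidef.nonneg

theorem rpow_one_of_posDef (hA : A.PosDef) : A ^ (1 : ℝ) = A :=
  CFC.rpow_one A hA.posSemidef.nonneg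

theorem rpow_rpow_of_posDef (hA : A.PosDef) (s t : ℝ) : (A ^ s) ^ t = A ^ (s * t) := by
  rcases eq_or_ne s 0 with rfl | hs
  · rw [rpow_zero_of_posDef hA, CFC.one_rpow, zero_mul, rpow_zero_of_posDef hA]
  · exact CFC.rpow_rpow A s t hs (isStrictlyPositive_iff_posDef.mpr hA)

theorem inv_rpow_of_posDef (hA : A.PosDef) (t : ℝ) : (A ^ t)⁻¹ = A ^ (-t) := by
  refine inv_eq_left_inv ?_
  rw [rpow_mul_rpow hA, neg_add_cancel, rpow_zero_of_posDef hA]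

theorem inv_eq_rpow_neg_one (hA : A.PosDef) : A⁻¹ = A ^ (-1 : ℝ) := by
  rw [← inv_rpow_of_posDef hA, rpow_one_of_posDef hA]

theorem inv_rpow_mul_mul_rpow (hA : A.PosDef) (B : Matrix n n ℂ) (t : ℝ) :
    (A ^ t * B * A ^ t)⁻¹ = A ^ (-t) * B⁻¹ * A ^ (-t) := by
  rw [Matrix.mul_inv_rev, Matrix.mul_inv_rev, inv_rpow_of_posDef hA, Matrix.mul_assoc]

theorem rpow_mul_rpow_neg_conj_mul_rpow (hA : A.PosDef) (B : Matrix n n ℂ) (t : ℝ) :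
    A ^ t * (A ^ (-t) * B * A ^ (-t)) * A ^ t = B := by
  calc A ^ t * (A ^ (-t) * B * A ^ (-t)) * A ^ t = A ^ t * A ^ (-t) * B * (A ^ (-t) * A ^ t) := by
        simp only [Matrix.mul_assoc]
    _ = B := by
        rw [rpow_mul_rpow hA, rpow_mul_rpow hA, add_neg_cancel, neg_add_cancel,
          rpow_zero_of_posDef hA, Matrix.one_mul, Matrix.mul_one]

theorem rpow_mul_self_mul_rpow (hA : A.PosDef) (t : ℝ) : A ^ t * A * A ^ t = A ^ (2 * t + 1) := by
  nth_rw 2 [← rpow_one_of_posDef hA]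
  rw [rpow_mul_rpow hA, rpow_mul_rpow hA]
  ring_nf

theorem conjTranspose_rpow (hA : A.PosDef) (t : ℝ) : (A ^ t)ᴴ = A ^ t :=
  (posDef_rpow hA t).isHermitian

theorem posDef_rpow_mul_mul_rpow (hA : A.PosDef) (hB : B.PosDef) (t : ℝ) :
    (B ^ t * A * B ^ t).PosDef := by
  have h := (IsUnit.posDef_star_left_conjugate_iff (posDef_rpow hB t).isUnit).mpr hA
  rwa [star_eq_conjTranspose, conjTranspose_rpow hB] at h

theorem matPow_eq_rpow (hA : A.PosDef) (t : ℝ) : matPow A t = A ^ t := by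
  rw [CFC.rpow_eq_cfc_real hA.posSemidef.nonneg, hA.isHermitian.cfc_eq, IsHermitian.cfc,
    Unitary.conjStarAlgAut_apply, matPow, dif_pos hA.isHermitian]
  simp only [hA.eigenvalues_pos, if_true]
  rfl

end PositiveDefinitePowers

section EigPowSum

open scoped MatrixOrder

variable {n : Type*} [Fintype n] [DecidableEq n] {A : Matrix n n ℂ}

/-- The sum of the `s`-th powers of the real parts of the eigenvalues, read off the characteristic
polynomial. For positive semidefinite `A` it is `Tr A ^ s`. Being cyclic, it also attaches to the
non-Hermitian product `M * N` of two positive definite matrices the value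
`Tr (N ^ (1/2) * M * N ^ (1/2)) ^ s`. -/
noncomputable def eigPowSum (A : Matrix n n ℂ) (s : ℝ) : ℝ :=
  (A.charpoly.roots.map fun z => z.re ^ s).sum

theorem eigPowSum_mul_comm (A B : Matrix n n ℂ) (s : ℝ) :
    eigPowSum (A * B) s = eigPowSum (B * A) s := by
  rw [eigPowSum, charpoly_mul_comm, eigPowSum]

theorem eigPowSum_eq_sum_eigenvalues (hA : A.IsHermitian) (s : ℝ) :
    eigPowSum A s = ∑ i, hA.eigenvalues i ^ s := by
  rw [eigPowSum, hA.roots_charpoly_eq_eigenvalues, Multiset.map_map]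
  rfl

theorem trace_matPow_re_eq_sum_eigenvalues (hA : A.IsHermitian) (s : ℝ) :
    (matPow A s).trace.re = ∑ i, if 0 < hA.eigenvalues i then hA.eigenvalues i ^ s else 0 := by
  rw [matPow, dif_pos hA, trace_mul_cycle, Unitary.coe_star_mul_self, one_mul, trace_diagonal,
    Complex.re_sum]
  simp only [Complex.ofReal_re]

theorem trace_matPow_re (hA : A.PosSemidef) {s : ℝ} (hs : s ≠ 0) :
    (matPow A s).trace.re = eigPowSum A s := by
  rw [trace_matPow_re_eq_sum_eigenvalues hA.isHermitian,
    eigPowSum_eq_sum_eigenvalues hA.isHermitian]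
  refine Finset.sum_congr rfl fun i _ => ?_
  rcases (hA.eigenvalues_nonneg i).eq_or_lt with h | h
  · simp [← h, Real.zero_rpow hs]
  · simp [h]

theorem trace_rpow_re (hA : A.PosDef) (s : ℝ) : (A ^ s).trace.re = eigPowSum A s := by
  rw [← matPow_eq_rpow hA, trace_matPow_re_eq_sum_eigenvalues hA.isHermitian,
    eigPowSum_eq_sum_eigenvalues hA.isHermitian]
  simp only [hA.eigenvalues_pos, if_true]

theorem eigPowSum_rpow (hA : A.PosDef) (s t : ℝ) : eigPowSum (A ^ s) t = eigPowSum A (s * t) := by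
  rw [← trace_rpow_re (posDef_rpow hA s), rpow_rpow_of_posDef hA, trace_rpow_re hA]

theorem eigPowSum_inv (hA : A.PosDef) (s : ℝ) : eigPowSum A⁻¹ s = eigPowSum A (-s) := by
  rw [inv_eq_rpow_neg_one hA, eigPowSum_rpow hA, neg_one_mul]

theorem eigPowSum_mul_conj (M L Y R : Matrix n n ℂ) (s : ℝ) :
    eigPowSum (M * (L * Y * R)) s = eigPowSum (R * M * L * Y) s := by
  rw [← Matrix.mul_assoc, eigPowSum_mul_comm]
  simp only [Matrix.mul_assoc]

theorem eigPowSum_mul_eq_rpow_mul_mul_rpow (M : Matrix n n ℂ) {G : Matrix n n ℂ} (hG : G.PosDef)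
    (s : ℝ) :
    eigPowSum (M * G) s = eigPowSum (G ^ (1 / 2 : ℝ) * M * G ^ (1 / 2 : ℝ)) s := by
  rw [Matrix.mul_assoc, eigPowSum_mul_comm (G ^ (1 / 2 : ℝ)), Matrix.mul_assoc, rpow_mul_rpow hG,
    add_halves, rpow_one_of_posDef hG]

end EigPowSum

section SpectralForm

open scoped MatrixOrder

variable {m n : Type*} [Fintype m] [DecidableEq m] [Fintype n] [DecidableEq n]
  {A : Matrix m m ℂ} {B : Matrix n n ℂ} {h h' : ℝ → ℝ → ℝ}

/-- The sesquilinear form `Re Tr (h(L_A, R_B) K * Yᴴ)`, where `h(L_A, R_B)` is the function `h` of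
the commuting operators `L_A : K ↦ A * K` and `R_B : K ↦ K * B`, written out in eigenbases of `A`
and `B`. The value is `0` unless both `A` and `B` are Hermitian. -/
noncomputable def spectralForm (h : ℝ → ℝ → ℝ) (A : Matrix m m ℂ) (B : Matrix n n ℂ)
    (K Y : Matrix m n ℂ) : ℝ :=
  if hAB : A.IsHermitian ∧ B.IsHermitian then
    ∑ i, ∑ j, h (hAB.1.eigenvalues i) (hAB.2.eigenvalues j) *
      ((star (hAB.1.eigenvectorUnitary : Matrix m m ℂ) * K *
          (hAB.2.eigenvectorUnitary : Matrix n n ℂ)) i j *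
        star ((star (hAB.1.eigenvectorUnitary : Matrix m m ℂ) * Y *
          (hAB.2.eigenvectorUnitary : Matrix n n ℂ)) i j)).re
  else 0

theorem spectralForm_of_isHermitian (h : ℝ → ℝ → ℝ) (hA : A.IsHermitian) (hB : B.IsHermitian)
    (K Y : Matrix m n ℂ) :
    spectralForm h A B K Y = ∑ i, ∑ j, h (hA.eigenvalues i) (hB.eigenvalues j) *
      ((star (hA.eigenvectorUnitary : Matrix m m ℂ) * K *
          (hB.eigenvectorUnitary : Matrix n n ℂ)) i j *
        star ((star (hA.eigenvectorUnitary : Matrix m m ℂ) * Y *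
          (hB.eigenvectorUnitary : Matrix n n ℂ)) i j)).re := by
  rw [spectralForm, dif_pos ⟨hA, hB⟩]

theorem spectralForm_add (h h' : ℝ → ℝ → ℝ) (A : Matrix m m ℂ) (B : Matrix n n ℂ)
    (K Y : Matrix m n ℂ) : spectralForm (fun a b => h a b + h' a b) A B K Y =
      spectralForm h A B K Y + spectralForm h' A B K Y := by
  by_cases hAB : A.IsHermitian ∧ B.IsHermitian
  · simp only [spectralForm_of_isHermitian _ hAB.1 hAB.2, add_mul, Finset.sum_add_distrib]
  · simp only [spectralForm, dif_neg hAB, add_zero]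

theorem spectralForm_const_mul (c : ℝ) (h : ℝ → ℝ → ℝ) (A : Matrix m m ℂ) (B : Matrix n n ℂ)
    (K Y : Matrix m n ℂ) :
    spectralForm (fun a b => c * h a b) A B K Y = c * spectralForm h A B K Y := by
  by_cases hAB : A.IsHermitian ∧ B.IsHermitian
  · simp only [spectralForm_of_isHermitian _ hAB.1 hAB.2, mul_assoc, Finset.mul_sum]
  · simp only [spectralForm, dif_neg hAB, mul_zero]

theorem spectralForm_congr (hA : A.PosDef) (hB : B.PosDef) (K Y : Matrix m n ℂ)
    (hh : ∀ a b, 0 < a → 0 < b → h a b = h' a b) :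
    spectralForm h A B K Y = spectralForm h' A B K Y := by
  simp only [spectralForm_of_isHermitian _ hA.isHermitian hB.isHermitian,
    hh _ _ (hA.eigenvalues_pos _) (hB.eigenvalues_pos _)]

theorem spectralForm_mono (hA : A.PosDef) (hB : B.PosDef) (K : Matrix m n ℂ)
    (hh : ∀ a b, 0 < a → 0 < b → h a b ≤ h' a b) :
    spectralForm h A B K K ≤ spectralForm h' A B K K := by
  simp only [spectralForm_of_isHermitian _ hA.isHermitian hB.isHermitian, Complex.star_def,
    Complex.mul_conj, Complex.ofReal_re]
  gcongr with i _ j _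
  · exact Complex.normSq_nonneg _
  · exact hh _ _ (hA.eigenvalues_pos i) (hB.eigenvalues_pos j)

theorem spectralForm_mul (f g : ℝ → ℝ) (hA : A.IsHermitian) (hB : B.IsHermitian)
    (K Y : Matrix m n ℂ) : spectralForm (fun a b => f a * g b) A B K Y =
      (cfc f A * K * cfc g B * Yᴴ).trace.re := by
  set U := (hA.eigenvectorUnitary : Matrix m m ℂ)
  set V := (hB.eigenvectorUnitary : Matrix n n ℂ)
  set D := diagonal (fun i => (f (hA.eigenvalues i) : ℂ))
  set D' := diagonal (fun j => (g (hB.eigenvalues j) : ℂ))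
  have hfA : cfc f A = U * D * star U := hA.cfc_eq f
  have hgB : cfc g B = V * D' * star V := hB.cfc_eq g
  have htrace : (cfc f A * K * cfc g B * Yᴴ).trace =
      (D * (star U * K * V) * D' * (star U * Y * V)ᴴ).trace := by
    simp only [hfA, hgB, star_eq_conjTranspose, conjTranspose_mul, conjTranspose_conjTranspose,
      Matrix.mul_assoc]
    rw [trace_mul_comm]
    simp only [Matrix.mul_assoc]
  rw [htrace, trace, spectralForm_of_isHermitian _ hA hB, Complex.re_sum]
  simp only [diag_apply, mul_apply (N := (star U * Y * V)ᴴ), Complex.re_sum]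
  refine Finset.sum_congr rfl fun i _ => Finset.sum_congr rfl fun j _ => ?_
  rw [mul_diagonal, diagonal_mul, conjTranspose_apply, ← Complex.re_ofReal_mul,
    Complex.ofReal_mul]
  congr 1
  ring

theorem spectralForm_rpow_mul_rpow (hA : A.PosDef) (hB : B.PosDef) (K Y : Matrix m n ℂ)
    (p r : ℝ) : spectralForm (fun a b => a ^ p * b ^ r) A B K Y =
      (A ^ p * K * B ^ r * Yᴴ).trace.re := by
  rw [spectralForm_mul (fun a => a ^ p) (fun b => b ^ r) hA.isHermitian hB.isHermitian,
    CFC.rpow_eq_cfc_real hA.posSemidef.nonneg, CFC.rpow_eq_cfc_real hB.posSemidef.nonneg]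

theorem spectralForm_affine (c₀ c₁ c₂ : ℝ) (hA : A.PosDef) (hB : B.PosDef)
    (K Y : Matrix m n ℂ) : spectralForm (fun a b => c₀ + c₁ * a + c₂ * b) A B K Y =
      c₀ * (K * Yᴴ).trace.re + c₁ * (A * K * Yᴴ).trace.re + c₂ * (K * B * Yᴴ).trace.re := by
  have hconst := spectralForm_rpow_mul_rpow hA hB K Y 0 0
  have hleft := spectralForm_rpow_mul_rpow hA hB K Y 1 0
  have hright := spectralForm_rpow_mul_rpow hA hB K Y 0 1
  simp only [Real.rpow_zero, Real.rpow_one, rpow_zero_of_posDef hA, rpow_zero_of_posDef hB,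
    rpow_one_of_posDef hA, rpow_one_of_posDef hB, mul_one, one_mul, Matrix.one_mul,
    Matrix.mul_one] at hconst hleft hright
  rw [← hconst, ← hleft, ← hright, ← spectralForm_const_mul, ← spectralForm_const_mul,
    ← spectralForm_const_mul, ← spectralForm_add, ← spectralForm_add]
  simp only [mul_one]

theorem convexOn_spectralForm_affine (c₀ c₁ c₂ : ℝ) (K Y : Matrix m n ℂ) :
    ConvexOn ℝ (posDefCone m ×ˢ posDefCone n)
      fun P => spectralForm (fun a b => c₀ + c₁ * a + c₂ * b) P.1 P.2 K Y := by
  refine ⟨convex_posDefCone.prod convex_posDefCone, fun P hP Q hQ a b ha hb hab => le_of_eq ?_⟩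
  have hPQ := convex_posDefCone.prod convex_posDefCone hP hQ ha hb hab
  beta_reduce
  rw [spectralForm_affine _ _ _ hPQ.1 hPQ.2, spectralForm_affine _ _ _ hP.1 hP.2,
    spectralForm_affine _ _ _ hQ.1 hQ.2]
  simp only [Prod.fst_add, Prod.snd_add, Prod.smul_fst, Prod.smul_snd, Matrix.add_mul,
    Matrix.mul_add, Matrix.smul_mul, Matrix.mul_smul, trace_add, trace_smul, Complex.add_re,
    Complex.real_smul, Complex.re_ofReal_mul, smul_eq_mul]
  linear_combination -c₀ * (K * Yᴴ).trace.re * hab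

theorem two_mul_inner_sub_normSq_le (k y : ℂ) (l : ℝ) {c : ℝ} (hc : 0 < c) :
    2 * (l * (k * star y).re) - c * (y * star y).re ≤ l ^ 2 / c * (k * star k).re := by
  have hsq : l ^ 2 / c * (k * star k).re - (2 * (l * (k * star y).re) - c * (y * star y).re) =
      c * Complex.normSq (y - ((l / c : ℝ) : ℂ) * k) := by
    simp only [Complex.normSq_apply, Complex.star_def, Complex.mul_re, Complex.sub_re,
      Complex.sub_im, Complex.conj_re, Complex.conj_im, Complex.mul_im, Complex.ofReal_re,
      Complex.ofReal_im]
    field_simp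
    ring
  have := mul_nonneg hc.le (Complex.normSq_nonneg (y - ((l / c : ℝ) : ℂ) * k))
  linarith

theorem two_mul_inner_sub_normSq_eq (k : ℂ) (l : ℝ) {c : ℝ} (hc : 0 < c) :
    2 * (l * (k * star ((l / c : ℝ) * k)).re) - c * ((l / c : ℝ) * k * star ((l / c : ℝ) * k)).re =
      l ^ 2 / c * (k * star k).re := by
  simp only [Complex.star_def, Complex.mul_re, Complex.conj_re, Complex.conj_im, Complex.mul_im,
    Complex.ofReal_re, Complex.ofReal_im]
  field_simp
  ring

theorem two_mul_spectralForm_sub_le {l c : ℝ → ℝ → ℝ} (hc : ∀ a b, 0 < a → 0 < b → 0 < c a b)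
    (hA : A.PosDef) (hB : B.PosDef) (K Y : Matrix m n ℂ) :
    2 * spectralForm l A B K Y - spectralForm c A B Y Y ≤
      spectralForm (fun a b => l a b ^ 2 / c a b) A B K K := by
  simp only [spectralForm_of_isHermitian _ hA.isHermitian hB.isHermitian, Finset.mul_sum,
    ← Finset.sum_sub_distrib]
  gcongr with i _ j _
  exact two_mul_inner_sub_normSq_le _ _ _ (hc _ _ (hA.eigenvalues_pos i) (hB.eigenvalues_pos j))

theorem exists_two_mul_spectralForm_sub_eq {l c : ℝ → ℝ → ℝ}
    (hc : ∀ a b, 0 < a → 0 < b → 0 < c a b) (hA : A.PosDef) (hB : B.PosDef) (K : Matrix m n ℂ) :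
    ∃ Y, 2 * spectralForm l A B K Y - spectralForm c A B Y Y =
      spectralForm (fun a b => l a b ^ 2 / c a b) A B K K := by
  set U := (hA.isHermitian.eigenvectorUnitary : Matrix m m ℂ) with hU
  set V := (hB.isHermitian.eigenvectorUnitary : Matrix n n ℂ) with hV
  set a := hA.isHermitian.eigenvalues
  set b := hB.isHermitian.eigenvalues
  let Z : Matrix m n ℂ := of fun i j => ((l (a i) (b j) / c (a i) (b j) : ℝ) : ℂ) *
    (star U * K * V) i j
  have hZ : star U * (U * Z * star V) * V = Z := by
    calc star U * (U * Z * star V) * V = (star U * U) * Z * (star V * V) := by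
          simp only [Matrix.mul_assoc]
      _ = Z := by
          rw [hU, hV, Unitary.coe_star_mul_self, Unitary.coe_star_mul_self, Matrix.one_mul,
            Matrix.mul_one]
  refine ⟨U * Z * star V, ?_⟩
  simp only [spectralForm_of_isHermitian _ hA.isHermitian hB.isHermitian, Finset.mul_sum,
    ← Finset.sum_sub_distrib, ← hU, ← hV, hZ]
  refine Finset.sum_congr rfl fun i _ => Finset.sum_congr rfl fun j _ => ?_
  exact two_mul_inner_sub_normSq_eq _ _ (hc _ _ (hA.eigenvalues_pos i) (hB.eigenvalues_pos j))

section Integral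

open MeasureTheory

variable {α : Type*} [MeasurableSpace α] {μ : Measure α} {k : α → ℝ → ℝ → ℝ}

theorem integrable_spectralForm (hA : A.PosDef) (hB : B.PosDef) (K Y : Matrix m n ℂ)
    (hk : ∀ a b, 0 < a → 0 < b → Integrable (fun τ => k τ a b) μ) :
    Integrable (fun τ => spectralForm (k τ) A B K Y) μ := by
  simp only [spectralForm_of_isHermitian _ hA.isHermitian hB.isHermitian]
  exact integrable_finsetSum _ fun i _ => integrable_finsetSum _ fun j _ =>
    (hk _ _ (hA.eigenvalues_pos i) (hB.eigenvalues_pos j)).mul_const _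

theorem integral_spectralForm (hA : A.PosDef) (hB : B.PosDef) (K Y : Matrix m n ℂ)
    (hk : ∀ a b, 0 < a → 0 < b → Integrable (fun τ => k τ a b) μ) :
    ∫ τ, spectralForm (k τ) A B K Y ∂μ =
      spectralForm (fun a b => ∫ τ, k τ a b ∂μ) A B K Y := by
  have hterm := fun i j =>
    hk _ _ (hA.eigenvalues_pos i) (hB.eigenvalues_pos j)
  simp only [spectralForm_of_isHermitian _ hA.isHermitian hB.isHermitian]
  rw [integral_finsetSum _ fun i _ => integrable_finsetSum _ fun j _ => (hterm i j).mul_const _]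
  refine Finset.sum_congr rfl fun i _ => ?_
  rw [integral_finsetSum _ fun j _ => (hterm i j).mul_const _]
  simp only [integral_mul_const]

end Integral

end SpectralForm

section JointlyConvexKernel

open MeasureTheory Set

variable {m n : Type*} [Fintype m] [DecidableEq m] [Fintype n] [DecidableEq n] {h h' : ℝ → ℝ → ℝ}

/-- A kernel `h` is jointly convex when each quadratic form `Re Tr (Kᴴ * h(L_A, R_B) K)` is jointly
convex in the positive definite pair `(A, B)`; for `h a b = a ^ p * b ^ r` this form is
`Re Tr (Kᴴ * A ^ p * K * B ^ r)`. -/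
def JointlyConvexKernel (m n : Type*) [Fintype m] [DecidableEq m] [Fintype n] [DecidableEq n]
    (h : ℝ → ℝ → ℝ) : Prop :=
  ∀ K : Matrix m n ℂ,
    ConvexOn ℝ (posDefCone m ×ˢ posDefCone n) fun P => spectralForm h P.1 P.2 K K

namespace JointlyConvexKernel

theorem congr (hh : JointlyConvexKernel m n h)
    (heq : ∀ a b, 0 < a → 0 < b → h a b = h' a b) : JointlyConvexKernel m n h' :=
  fun K => (hh K).congr fun _ hP => spectralForm_congr hP.1 hP.2 K K heq

theorem add (hh : JointlyConvexKernel m n h) (hh' : JointlyConvexKernel m n h') :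
    JointlyConvexKernel m n fun a b => h a b + h' a b := fun K => by
  simp only [spectralForm_add]
  exact (hh K).add (hh' K)

theorem const_mul (hh : JointlyConvexKernel m n h) {c : ℝ} (hc : 0 ≤ c) :
    JointlyConvexKernel m n fun a b => c * h a b := fun K => by
  simp only [spectralForm_const_mul]
  exact (hh K).smul hc

theorem affine (c₀ c₁ c₂ : ℝ) :
    JointlyConvexKernel m n fun a b => c₀ + c₁ * a + c₂ * b :=
  fun K => convexOn_spectralForm_affine c₀ c₁ c₂ K K

-- Completing the square exhibits the form as a pointwise maximum of forms affine in `(A, B)`.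
theorem sq_div_affine {l₁ l₂ c₀ c₁ c₂ : ℝ}
    (hc : ∀ a b : ℝ, 0 < a → 0 < b → 0 < c₀ + c₁ * a + c₂ * b) :
    JointlyConvexKernel m n fun a b => (l₁ * a + l₂ * b) ^ 2 / (c₀ + c₁ * a + c₂ * b) := by
  intro K
  refine convexOn_of_forall_exists_touching_minorant (convex_posDefCone.prod convex_posDefCone)
    fun P hP => ?_
  obtain ⟨Y, hY⟩ := exists_two_mul_spectralForm_sub_eq
    (l := fun a b => l₁ * a + l₂ * b) hc hP.1 hP.2 K
  refine ⟨fun Q => 2 * spectralForm (fun a b => l₁ * a + l₂ * b) Q.1 Q.2 K Y -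
    spectralForm (fun a b => c₀ + c₁ * a + c₂ * b) Q.1 Q.2 Y Y, ?_,
    fun Q hQ => two_mul_spectralForm_sub_le hc hQ.1 hQ.2 K Y, hY.ge⟩
  have hlin := (convexOn_spectralForm_affine 0 l₁ l₂ K Y).smul zero_le_two
  have hquad := convexOn_spectralForm_affine (-1 * c₀) (-1 * c₁) (-1 * c₂) Y Y
  simp only [mul_assoc, ← mul_add, spectralForm_const_mul, zero_add, smul_eq_mul] at hlin hquad
  refine (hlin.add hquad).congr fun Q _ => ?_
  simp only [Pi.add_apply]
  ring

theorem integral {α : Type*} [MeasurableSpace α] {μ : Measure α} {k : α → ℝ → ℝ → ℝ}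
    (hk : ∀ᵐ τ ∂μ, JointlyConvexKernel m n (k τ))
    (hint : ∀ a b, 0 < a → 0 < b → Integrable (fun τ => k τ a b) μ) :
    JointlyConvexKernel m n fun a b => ∫ τ, k τ a b ∂μ := fun K =>
  (integral_convexOn_of_integrand_ae (convex_posDefCone.prod convex_posDefCone)
    (hk.mono fun _ hτ => hτ K) fun _ hP => integrable_spectralForm hP.1 hP.2 K K hint).congr
    fun _ hP => integral_spectralForm hP.1 hP.2 K K hint

theorem rpow_mul_rpow_one_sub {p : ℝ} (hp₁ : 1 ≤ p) (hp₂ : p ≤ 2) :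
    JointlyConvexKernel m n fun a b => a ^ p * b ^ (1 - p) := by
  rcases hp₁.eq_or_lt with rfl | hp₁
  · exact (affine 0 1 0).congr (by simp)
  rcases hp₂.eq_or_lt with rfl | hp₂
  · refine (sq_div_affine (l₁ := 1) (l₂ := 0) (c₀ := 0) (c₁ := 0) (c₂ := 1) (by simp)).congr ?_
    intro a b _ _
    norm_num [Real.rpow_neg_one]
    rfl
  have hr : p - 1 ∈ Ioo (0 : ℝ) 1 := ⟨by linarith, by linarith⟩
  refine ((integral (μ := volume.restrict (Ioi 0))
    (k := fun τ a b => a * Real.rpowIntegrand₀₁ (p - 1) τ (a / b)) ?_ ?_).const_mul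
    (inv_nonneg.mpr (Real.integral_rpowIntegrand₀₁_one_pos hr).le)).congr ?_
  · refine ae_restrict_of_forall_mem measurableSet_Ioi fun τ (hτ : 0 < τ) => ?_
    refine ((sq_div_affine (l₁ := 1) (l₂ := 0) (c₀ := 0) (c₁ := 1) (c₂ := τ)
      (by intros; positivity)).const_mul (Real.rpow_nonneg hτ.le (p - 1 - 1))).congr ?_
    intro a b ha hb
    rw [Real.rpowIntegrand₀₁_eq_pow_div hr hτ.le (by positivity)]
    field_simp
    ring
  · intro a b ha hb
    exact (Real.integrableOn_rpowIntegrand₀₁_Ioi hr (by positivity)).const_mul _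
  · intro a b ha hb
    rw [integral_const_mul, mul_left_comm, ← Real.rpow_eq_const_mul_integral hr (by positivity),
      Real.div_rpow ha.le hb.le, Real.rpow_sub_one ha.ne', show 1 - p = -(p - 1) by ring,
      Real.rpow_neg hb.le]
    field_simp

theorem neg_rpow_mul_rpow_one_sub {p : ℝ} (hp₀ : 0 ≤ p) (hp₁ : p ≤ 1) :
    JointlyConvexKernel m n fun a b => -(a ^ p * b ^ (1 - p)) := by
  rcases hp₀.eq_or_lt with rfl | hp₀
  · exact (affine 0 0 (-1)).congr (by simp)
  rcases hp₁.eq_or_lt with rfl | hp₁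
  · exact (affine 0 (-1) 0).congr (by simp)
  have hr : p ∈ Ioo (0 : ℝ) 1 := ⟨hp₀, hp₁⟩
  refine ((integral (μ := volume.restrict (Ioi 0))
    (k := fun τ a b => -b * Real.rpowIntegrand₀₁ p τ (a / b)) ?_ ?_).const_mul
    (inv_nonneg.mpr (Real.integral_rpowIntegrand₀₁_one_pos hr).le)).congr ?_
  · refine ae_restrict_of_forall_mem measurableSet_Ioi fun τ (hτ : 0 < τ) => ?_
    refine (((sq_div_affine (l₁ := 1) (l₂ := 0) (c₀ := 0) (c₁ := 1) (c₂ := τ)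
      (by intros; positivity)).add (affine 0 (-1) 0)).const_mul
      (c := τ ^ (p - 1) / τ) (by positivity)).congr ?_
    intro a b ha hb
    rw [Real.rpowIntegrand₀₁_eq_pow_div hr hτ.le (by positivity)]
    field_simp
    ring
  · intro a b ha hb
    exact (Real.integrableOn_rpowIntegrand₀₁_Ioi hr (by positivity)).const_mul _
  · intro a b ha hb
    rw [integral_const_mul, mul_left_comm, ← Real.rpow_eq_const_mul_integral hr (by positivity),
      Real.div_rpow ha.le hb.le, Real.rpow_sub hb, Real.rpow_one]
    field_simp

theorem rpow_mul_sq {p : ℝ} (hp₁ : -1 ≤ p) (hp₀ : p ≤ 0) :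
    JointlyConvexKernel m n fun a b => a ^ p * b ^ (2 : ℝ) := by
  rcases hp₀.eq_or_lt with rfl | hp₀
  · exact (sq_div_affine (l₁ := 0) (l₂ := 1) (c₀ := 1) (c₁ := 0) (c₂ := 0) (by simp)).congr
      (by simp)
  rcases hp₁.eq_or_lt with rfl | hp₁
  · refine (sq_div_affine (l₁ := 0) (l₂ := 1) (c₀ := 0) (c₁ := 1) (c₂ := 0)
      (by intros; simpa)).congr ?_
    intro a b _ _
    norm_num [Real.rpow_neg_one]
    field_simp
  have hr : p + 1 ∈ Ioo (0 : ℝ) 1 := ⟨by linarith, by linarith⟩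
  refine ((integral (μ := volume.restrict (Ioi 0))
    (k := fun τ a b => b ^ 2 / a * Real.rpowIntegrand₀₁ (p + 1) τ a) ?_ ?_).const_mul
    (inv_nonneg.mpr (Real.integral_rpowIntegrand₀₁_one_pos hr).le)).congr ?_
  · refine ae_restrict_of_forall_mem measurableSet_Ioi fun τ (hτ : 0 < τ) => ?_
    refine ((sq_div_affine (l₁ := 0) (l₂ := 1) (c₀ := τ) (c₁ := 1) (c₂ := 0)
      (by intros; positivity)).const_mul (c := τ ^ (p + 1 - 1)) (by positivity)).congr ?_
    intro a b ha hb
    rw [Real.rpowIntegrand₀₁_eq_pow_div hr hτ.le (by positivity)]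
    field_simp
    ring
  · intro a b ha _
    exact (Real.integrableOn_rpowIntegrand₀₁_Ioi hr (by positivity)).const_mul _
  · intro a b ha hb
    rw [integral_const_mul, mul_left_comm, ← Real.rpow_eq_const_mul_integral hr (by positivity),
      Real.rpow_add_one ha.ne']
    norm_num
    field_simp

end JointlyConvexKernel

end JointlyConvexKernel

section LiebConcavity

variable {m n : Type*} [Fintype m] [DecidableEq m] [Fintype n] [DecidableEq n] {p : ℝ}

open scoped MatrixOrder

theorem JointlyConvexKernel.convexOn_trace {r : ℝ}
    (h : JointlyConvexKernel m n fun a b => a ^ p * b ^ r) (K : Matrix m n ℂ) :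
    ConvexOn ℝ (posDefCone m ×ˢ posDefCone n)
      fun P => (Kᴴ * P.1 ^ p * K * P.2 ^ r).trace.re :=
  (h K).congr fun P hP => by
    beta_reduce
    rw [spectralForm_rpow_mul_rpow hP.1 hP.2, trace_mul_comm]
    simp only [Matrix.mul_assoc]

theorem JointlyConvexKernel.concaveOn_trace {r : ℝ}
    (h : JointlyConvexKernel m n fun a b => -(a ^ p * b ^ r)) (K : Matrix m n ℂ) :
    ConcaveOn ℝ (posDefCone m ×ˢ posDefCone n)
      fun P => (Kᴴ * P.1 ^ p * K * P.2 ^ r).trace.re := by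
  rw [← neg_convexOn_iff]
  refine (h K).congr fun P hP => ?_
  simp only [neg_eq_neg_one_mul (_ ^ p * _ ^ r)]
  rw [spectralForm_const_mul,
    spectralForm_rpow_mul_rpow hP.1 hP.2, trace_mul_comm]
  simp only [Matrix.mul_assoc, Pi.neg_apply, neg_one_mul]

theorem concaveOn_trace_rpow_mul_rpow_one_sub (hp₀ : 0 ≤ p) (hp₁ : p ≤ 1) (K : Matrix m n ℂ) :
    ConcaveOn ℝ (posDefCone m ×ˢ posDefCone n)
      fun P => (Kᴴ * P.1 ^ p * K * P.2 ^ (1 - p)).trace.re :=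
  (JointlyConvexKernel.neg_rpow_mul_rpow_one_sub hp₀ hp₁).concaveOn_trace K

theorem convexOn_trace_rpow_mul_rpow_one_sub (hp₁ : 1 ≤ p) (hp₂ : p ≤ 2) (K : Matrix m n ℂ) :
    ConvexOn ℝ (posDefCone m ×ˢ posDefCone n)
      fun P => (Kᴴ * P.1 ^ p * K * P.2 ^ (1 - p)).trace.re :=
  (JointlyConvexKernel.rpow_mul_rpow_one_sub hp₁ hp₂).convexOn_trace K

theorem convexOn_trace_rpow_mul_sq (hp₁ : -1 ≤ p) (hp₀ : p ≤ 0) (K : Matrix m n ℂ) :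
    ConvexOn ℝ (posDefCone m ×ˢ posDefCone n)
      fun P => (Kᴴ * P.1 ^ p * K * P.2 ^ (2 : ℝ)).trace.re :=
  (JointlyConvexKernel.rpow_mul_sq hp₁ hp₀).convexOn_trace K

end LiebConcavity

section TraceTangent

open scoped MatrixOrder

theorem rpow_tangent_eq {x y : ℝ} (hx : 0 < x) (s : ℝ) :
    (1 - s) * x ^ s + s * (x ^ (s - 1) * y) = x ^ s * (1 + s * (y / x - 1)) := by
  rw [Real.rpow_sub_one hx.ne']
  field_simp
  ring

theorem rpow_eq_rpow_mul_div_rpow {x y : ℝ} (hx : 0 < x) (hy : 0 < y) (s : ℝ) :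
    y ^ s = x ^ s * (1 + (y / x - 1)) ^ s := by
  rw [add_sub_cancel, ← Real.mul_rpow hx.le (by positivity), mul_div_cancel₀ y hx.ne']

theorem one_add_mul_sub_one_le_rpow {z s : ℝ} (hz : 0 < z) (hs : s ≤ 0) :
    1 + s * (z - 1) ≤ z ^ s := by
  rw [Real.rpow_def_of_pos hz]
  have hexp := Real.add_one_le_exp (Real.log z * s)
  have hlog := mul_le_mul_of_nonpos_right (Real.log_le_sub_one_of_pos hz) hs
  linarith

theorem rpow_tangent_le {x y s : ℝ} (hs : 1 ≤ s ∨ s ≤ 0) (hx : 0 < x) (hy : 0 < y) :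
    (1 - s) * x ^ s + s * (x ^ (s - 1) * y) ≤ y ^ s := by
  have hz : 0 < y / x := by positivity
  rw [rpow_tangent_eq hx, rpow_eq_rpow_mul_div_rpow hx hy]
  gcongr
  rcases hs with hs | hs
  · exact one_add_mul_self_le_rpow_one_add (by linarith) hs
  · simpa only [add_sub_cancel] using one_add_mul_sub_one_le_rpow hz hs

theorem rpow_le_tangent {x y s : ℝ} (hs₀ : 0 ≤ s) (hs₁ : s ≤ 1) (hx : 0 < x) (hy : 0 < y) :
    y ^ s ≤ (1 - s) * x ^ s + s * (x ^ (s - 1) * y) := by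
  have hz : 0 < y / x := by positivity
  rw [rpow_tangent_eq hx, rpow_eq_rpow_mul_div_rpow hx hy]
  gcongr
  exact rpow_one_add_le_one_add_mul_self (by linarith) hs₀ hs₁

variable {n : Type*} [Fintype n] [DecidableEq n] {X Y : Matrix n n ℂ}

theorem trace_rpow_sub_one_mul_self (hX : X.PosDef) (s : ℝ) :
    (X ^ (s - 1) * X).trace.re = eigPowSum X s := by
  rw [← trace_rpow_re hX]
  nth_rw 2 [← rpow_one_of_posDef hX]
  rw [rpow_mul_rpow hX, sub_add_cancel]

theorem spectralForm_rpow_right_one (hX : X.PosDef) (hY : Y.PosDef) (s : ℝ) :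
    spectralForm (fun _ b => b ^ s) X Y 1 1 = eigPowSum Y s := by
  have h := spectralForm_rpow_mul_rpow hX hY 1 1 0 s
  simpa only [Real.rpow_zero, one_mul, rpow_zero_of_posDef hX, conjTranspose_one, Matrix.mul_one,
    Matrix.one_mul, trace_rpow_re hY] using h

theorem spectralForm_tangent_one (hX : X.PosDef) (hY : Y.PosDef) (s : ℝ) :
    spectralForm (fun a b => (1 - s) * a ^ s + s * (a ^ (s - 1) * b)) X Y 1 1 =
      (1 - s) * eigPowSum X s + s * (X ^ (s - 1) * Y).trace.re := by
  have hleft := spectralForm_rpow_mul_rpow hX hY 1 1 s 0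
  have hmixed := spectralForm_rpow_mul_rpow hX hY 1 1 (s - 1) 1
  simp only [Real.rpow_zero, Real.rpow_one, mul_one, rpow_zero_of_posDef hY,
    rpow_one_of_posDef hY, conjTranspose_one, trace_rpow_re hX] at hleft hmixed
  rw [spectralForm_add, spectralForm_const_mul, spectralForm_const_mul, hleft, hmixed]

theorem eigPowSum_tangent_le {s : ℝ} (hs : 1 ≤ s ∨ s ≤ 0) (hX : X.PosDef) (hY : Y.PosDef) :
    (1 - s) * eigPowSum X s + s * (X ^ (s - 1) * Y).trace.re ≤ eigPowSum Y s := by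
  rw [← spectralForm_tangent_one hX hY, ← spectralForm_rpow_right_one hX hY]
  exact spectralForm_mono hX hY 1 fun a b ha hb => rpow_tangent_le hs ha hb

theorem eigPowSum_le_tangent {s : ℝ} (hs₀ : 0 ≤ s) (hs₁ : s ≤ 1) (hX : X.PosDef)
    (hY : Y.PosDef) :
    eigPowSum Y s ≤ (1 - s) * eigPowSum X s + s * (X ^ (s - 1) * Y).trace.re := by
  rw [← spectralForm_tangent_one hX hY, ← spectralForm_rpow_right_one hX hY]
  exact spectralForm_mono hX hY 1 fun a b ha hb => rpow_le_tangent hs₀ hs₁ ha hb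

end TraceTangent

section VariationalPrinciple

open scoped MatrixOrder

variable {E : Type*} [AddCommMonoid E] [Module ℝ E] {S : Set E}
  {n : Type*} [Fintype n] [DecidableEq n] {Ω : E → Matrix n n ℂ} {s β : ℝ}

theorem convexOn_eigPowSum_of_convexOn_trace (hs : 1 ≤ s ∨ s ≤ 0) (hS : Convex ℝ S)
    (hΩ : ∀ x ∈ S, (Ω x).PosDef)
    (hconv : ∀ W : Matrix n n ℂ, W.PosDef → ConvexOn ℝ S fun x => s * (W * Ω x).trace.re) :
    ConvexOn ℝ S fun x => eigPowSum (Ω x) s := by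
  refine convexOn_of_forall_exists_touching_minorant hS fun x hx => ?_
  refine ⟨fun y => (1 - s) * eigPowSum (Ω x) s + s * (Ω x ^ (s - 1) * Ω y).trace.re,
    (convexOn_const _ hS).add (hconv _ (posDef_rpow (hΩ x hx) _)),
    fun y hy => eigPowSum_tangent_le hs (hΩ x hx) (hΩ y hy), ?_⟩
  beta_reduce
  rw [trace_rpow_sub_one_mul_self (hΩ x hx)]
  linarith

theorem concaveOn_eigPowSum_of_concaveOn_trace (hs₀ : 0 ≤ s) (hs₁ : s ≤ 1) (hS : Convex ℝ S)
    (hΩ : ∀ x ∈ S, (Ω x).PosDef)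
    (hconc : ∀ W : Matrix n n ℂ, W.PosDef → ConcaveOn ℝ S fun x => (W * Ω x).trace.re) :
    ConcaveOn ℝ S fun x => eigPowSum (Ω x) s := by
  refine concaveOn_of_forall_exists_touching_majorant hS fun x hx => ?_
  refine ⟨fun y => (1 - s) * eigPowSum (Ω x) s + s * (Ω x ^ (s - 1) * Ω y).trace.re,
    (concaveOn_const _ hS).add ((hconc _ (posDef_rpow (hΩ x hx) _)).smul hs₀),
    fun y hy => eigPowSum_le_tangent hs₀ hs₁ (hΩ x hx) (hΩ y hy), ?_⟩
  beta_reduce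
  rw [trace_rpow_sub_one_mul_self (hΩ x hx)]
  linarith

theorem convexOn_eigPowSum {γ : ℝ} (hγ : 1 ≤ γ ∨ γ ≤ 0) :
    ConvexOn ℝ (posDefCone n) fun X => eigPowSum X γ := by
  refine convexOn_eigPowSum_of_convexOn_trace hγ convex_posDefCone (fun _ hX => hX) fun W _ => ?_
  refine ⟨convex_posDefCone, fun X _ Y _ a b _ _ _ => le_of_eq ?_⟩
  simp only [Matrix.mul_add, Matrix.mul_smul, trace_add, trace_smul, Complex.add_re,
    Complex.real_smul, Complex.re_ofReal_mul, smul_eq_mul]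
  ring

theorem tangent_rpow_eq {N Z : Matrix n n ℂ} (hs : s ≠ 1) (hZ : Z.PosDef) :
    (1 - s) * eigPowSum (Z ^ (β / (s - 1))) s + s * ((Z ^ (β / (s - 1))) ^ (s - 1) * N).trace.re =
      (1 - s) * eigPowSum Z (β * s / (s - 1)) + s * (N * Z ^ β).trace.re := by
  rw [eigPowSum_rpow hZ, rpow_rpow_of_posDef hZ, div_mul_cancel₀ β (sub_ne_zero.mpr hs),
    trace_mul_comm, div_mul_eq_mul_div]

theorem exists_tangent_eq_eigPowSum {N : Matrix n n ℂ} (hs : s ≠ 1) (hβ : β ≠ 0)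
    (hN : N.PosDef) : ∃ Z ∈ posDefCone n,
      (1 - s) * eigPowSum Z (β * s / (s - 1)) + s * (N * Z ^ β).trace.re = eigPowSum N s := by
  refine ⟨N ^ ((s - 1) / β), posDef_rpow hN _, ?_⟩
  rw [← tangent_rpow_eq hs (posDef_rpow hN _), rpow_rpow_of_posDef hN,
    div_mul_div_cancel₀ hβ, div_self (sub_ne_zero.mpr hs), rpow_one_of_posDef hN,
    trace_rpow_sub_one_mul_self hN]
  ring

-- The tangent inequality at the base point `Z ^ (β / (s - 1))`, optimised over `Z`.
theorem convexOn_eigPowSum_of_jointly_convexOn_trace (hs₀ : 0 ≤ s) (hs₁ : s < 1) (hβ : β ≠ 0)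
    (hγ : 1 ≤ β * s / (s - 1) ∨ β * s / (s - 1) ≤ 0) (hS : Convex ℝ S)
    (hΩ : ∀ x ∈ S, (Ω x).PosDef)
    (hconv : ConvexOn ℝ (S ×ˢ posDefCone n) fun P => (Ω P.1 * P.2 ^ β).trace.re) :
    ConvexOn ℝ S fun x => eigPowSum (Ω x) s := by
  refine convexOn_of_attained_partial_min hS
    (((convexOn_prod_snd hS (convexOn_eigPowSum hγ)).smul (sub_nonneg.mpr hs₁.le)).add
      (hconv.smul hs₀)) (fun x hx Z hZ => ?_) fun x hx => ?_
  · exact (eigPowSum_le_tangent hs₀ hs₁.le (posDef_rpow hZ _) (hΩ x hx)).trans_eq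
      (tangent_rpow_eq hs₁.ne hZ)
  · obtain ⟨Z, hZ, h⟩ := exists_tangent_eq_eigPowSum hs₁.ne hβ (hΩ x hx)
    exact ⟨Z, hZ, h.le⟩

theorem concaveOn_eigPowSum_of_jointly_concaveOn_trace (hs₁ : 1 < s) (hβ : β ≠ 0)
    (hγ : 1 ≤ β * s / (s - 1) ∨ β * s / (s - 1) ≤ 0) (hS : Convex ℝ S)
    (hΩ : ∀ x ∈ S, (Ω x).PosDef)
    (hconc : ConcaveOn ℝ (S ×ˢ posDefCone n) fun P => (Ω P.1 * P.2 ^ β).trace.re) :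
    ConcaveOn ℝ S fun x => eigPowSum (Ω x) s := by
  have hpow : ConcaveOn ℝ (S ×ˢ posDefCone n)
      fun P => (1 - s) * eigPowSum P.2 (β * s / (s - 1)) :=
    ((convexOn_prod_snd hS (convexOn_eigPowSum hγ)).neg.smul (sub_nonneg.mpr hs₁.le)).congr
      fun P _ => by simp only [Pi.neg_apply, smul_eq_mul]; ring
  refine concaveOn_of_attained_partial_max hS
    (hpow.add (hconc.smul (zero_le_one.trans hs₁.le))) (fun x hx Z hZ => ?_) fun x hx => ?_
  · exact (tangent_rpow_eq hs₁.ne' hZ).symm.trans_le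
      (eigPowSum_tangent_le (.inl hs₁.le) (posDef_rpow hZ _) (hΩ x hx))
  · obtain ⟨Z, hZ, h⟩ := exists_tangent_eq_eigPowSum hs₁.ne' hβ (hΩ x hx)
    exact ⟨Z, hZ, h.ge⟩

theorem trace_mul_rpow_conj {G W : Matrix n n ℂ} (hG : G.PosDef) (hW : W.PosDef)
    (M : Matrix n n ℂ) : ((G ^ (1 / 2 : ℝ) * W ^ (1 / 2 : ℝ))ᴴ * M *
      (G ^ (1 / 2 : ℝ) * W ^ (1 / 2 : ℝ))).trace =
        (W * (G ^ (1 / 2 : ℝ) * M * G ^ (1 / 2 : ℝ))).trace := by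
  rw [conjTranspose_mul, conjTranspose_rpow hG, conjTranspose_rpow hW, ← Matrix.mul_assoc,
    trace_mul_comm]
  simp only [← Matrix.mul_assoc]
  rw [rpow_mul_rpow hW, add_halves, rpow_one_of_posDef hW]

variable {Φ : E → Matrix n n ℂ} {G : Matrix n n ℂ}

theorem convexOn_eigPowSum_mul (hs₀ : 0 ≤ s)
    (hβ : s < 1 → β ≠ 0 ∧ (1 ≤ β * s / (s - 1) ∨ β * s / (s - 1) ≤ 0)) (hS : Convex ℝ S)
    (hΦ : ∀ x ∈ S, (Φ x).PosDef) (hconv : ∀ L : Matrix n n ℂ,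
      ConvexOn ℝ (S ×ˢ posDefCone n) fun P => (Lᴴ * Φ P.1 * L * P.2 ^ β).trace.re)
    (hG : G.PosDef) : ConvexOn ℝ S fun x => eigPowSum (Φ x * G) s := by
  simp only [eigPowSum_mul_eq_rpow_mul_mul_rpow _ hG]
  have hΩ := fun x hx => posDef_rpow_mul_mul_rpow (hΦ x hx) hG (1 / 2)
  rcases le_or_gt 1 s with hs₁ | hs₁
  · refine convexOn_eigPowSum_of_convexOn_trace (.inl hs₁) hS hΩ fun W hW => ?_
    have hslice := convexOn_slice_left hS (hconv (G ^ (1 / 2 : ℝ) * W ^ (1 / 2 : ℝ)))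
      (y := 1) PosDef.one
    simp only [CFC.one_rpow, Matrix.mul_one, trace_mul_rpow_conj hG hW] at hslice
    exact hslice.smul hs₀
  · refine convexOn_eigPowSum_of_jointly_convexOn_trace hs₀ hs₁ (hβ hs₁).1 (hβ hs₁).2 hS hΩ ?_
    simpa only [conjTranspose_rpow hG] using hconv (G ^ (1 / 2 : ℝ))

theorem concaveOn_eigPowSum_mul (hs₀ : 0 ≤ s)
    (hβ : 1 < s → β ≠ 0 ∧ (1 ≤ β * s / (s - 1) ∨ β * s / (s - 1) ≤ 0)) (hS : Convex ℝ S)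
    (hΦ : ∀ x ∈ S, (Φ x).PosDef) (hconc : ∀ L : Matrix n n ℂ,
      ConcaveOn ℝ (S ×ˢ posDefCone n) fun P => (Lᴴ * Φ P.1 * L * P.2 ^ β).trace.re)
    (hG : G.PosDef) : ConcaveOn ℝ S fun x => eigPowSum (Φ x * G) s := by
  simp only [eigPowSum_mul_eq_rpow_mul_mul_rpow _ hG]
  have hΩ := fun x hx => posDef_rpow_mul_mul_rpow (hΦ x hx) hG (1 / 2)
  rcases le_or_gt s 1 with hs₁ | hs₁
  · refine concaveOn_eigPowSum_of_concaveOn_trace hs₀ hs₁ hS hΩ fun W hW => ?_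
    have hslice := concaveOn_slice_left hS (hconc (G ^ (1 / 2 : ℝ) * W ^ (1 / 2 : ℝ)))
      (y := 1) PosDef.one
    simpa only [CFC.one_rpow, Matrix.mul_one, trace_mul_rpow_conj hG hW] using hslice
  · refine concaveOn_eigPowSum_of_jointly_concaveOn_trace hs₁ (hβ hs₁).1 (hβ hs₁).2 hS hΩ ?_
    simpa only [conjTranspose_rpow hG] using hconc (G ^ (1 / 2 : ℝ))

end VariationalPrinciple

section TraceHolder

open scoped MatrixOrder

variable {n : Type*} [Fintype n] [DecidableEq n] {X C M N G : Matrix n n ℂ} {s s₁ s₂ : ℝ}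

-- Adding the tangent inequalities at `X ^ (s / s₁)` and at `X ^ (-s / s₂)` with weights `s / s₁`
-- and `s / s₂`, the mixed terms cancel.
theorem eigPowSum_le_of_conj (hs₁ : 1 ≤ s₁) (hs₂ : 0 < s₂) (hs : s / s₁ + s / s₂ = 1) (hs₀ : 0 ≤ s)
    (hX : X.PosDef) (hC : C.PosDef) :
    eigPowSum X s ≤ s / s₁ * eigPowSum (C * X) s₁ + s / s₂ * eigPowSum C (-s₂) := by
  have h₁ : 0 < s₁ := by linarith
  have hleft := eigPowSum_tangent_le (.inl hs₁) (posDef_rpow hX (s / s₁))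
    (posDef_rpow_mul_mul_rpow hC hX (1 / 2))
  have hright := eigPowSum_tangent_le (.inr (neg_nonpos.mpr hs₂.le)) (posDef_rpow hX (-(s / s₂))) hC
  have htrace : (X ^ (s - s / s₁) * (X ^ (1 / 2 : ℝ) * C * X ^ (1 / 2 : ℝ))).trace =
      (X ^ (s + s / s₂) * C).trace := by
    rw [← Matrix.mul_assoc, trace_mul_comm]
    simp only [← Matrix.mul_assoc]
    rw [rpow_mul_rpow hX, rpow_mul_rpow hX]
    congr 3
    linarith
  rw [eigPowSum_rpow hX, rpow_rpow_of_posDef hX, div_mul_cancel₀ s h₁.ne', mul_sub_one,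
    div_mul_cancel₀ s h₁.ne', htrace, ← eigPowSum_mul_eq_rpow_mul_mul_rpow C hX] at hleft
  rw [eigPowSum_rpow hX, rpow_rpow_of_posDef hX, neg_mul_neg, div_mul_cancel₀ s hs₂.ne',
    mul_sub_one, neg_mul_neg, div_mul_cancel₀ s hs₂.ne'] at hright
  simp only [sub_neg_eq_add] at hright
  calc eigPowSum X s
      = s / s₁ * ((1 - s₁) * eigPowSum X s + s₁ * (X ^ (s + s / s₂) * C).trace.re) +
        s / s₂ * ((1 + s₂) * eigPowSum X s + -s₂ * (X ^ (s + s / s₂) * C).trace.re) := by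
        have e₁ := div_mul_cancel₀ s h₁.ne'
        have e₂ := div_mul_cancel₀ s hs₂.ne'
        linear_combination (-hs + e₁ - e₂) * eigPowSum X s +
          (e₂ - e₁) * (X ^ (s + s / s₂) * C).trace.re
    _ ≤ s / s₁ * eigPowSum (C * X) s₁ + s / s₂ * eigPowSum C (-s₂) := by gcongr

theorem eigPowSum_mul_le_holder (hs₁ : 1 ≤ s₁) (hs₂ : 0 < s₂) (hs : s / s₁ + s / s₂ = 1)
    (hs₀ : 0 ≤ s) (hM : M.PosDef) (hN : N.PosDef) (hG : G.PosDef) :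
    eigPowSum (M * N) s ≤ s / s₁ * eigPowSum (M * G) s₁ + s / s₂ * eigPowSum (N * G⁻¹) s₂ := by
  have hC := posDef_rpow_mul_mul_rpow hG hN (-(1 / 2))
  have h := eigPowSum_le_of_conj hs₁ hs₂ hs hs₀ (posDef_rpow_mul_mul_rpow hM hN (1 / 2)) hC
  have hfirst : eigPowSum (N ^ (-(1 / 2) : ℝ) * G * N ^ (-(1 / 2) : ℝ) *
      (N ^ (1 / 2 : ℝ) * M * N ^ (1 / 2 : ℝ))) s₁ = eigPowSum (M * G) s₁ := by
    rw [eigPowSum_mul_conj, rpow_mul_rpow_neg_conj_mul_rpow hN, eigPowSum_mul_comm]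
  rwa [← eigPowSum_mul_eq_rpow_mul_mul_rpow M hN, hfirst, ← eigPowSum_inv hC,
    inv_rpow_mul_mul_rpow hN, neg_neg, ← eigPowSum_mul_eq_rpow_mul_mul_rpow _ hN,
    eigPowSum_mul_comm G⁻¹] at h

theorem exists_holder_eq (hs₁ : s₁ ≠ 0) (hs₂ : s₂ ≠ 0) (hs : s / s₁ + s / s₂ = 1)
    (hM : M.PosDef) (hN : N.PosDef) : ∃ G : Matrix n n ℂ, G.PosDef ∧
      s / s₁ * eigPowSum (M * G) s₁ + s / s₂ * eigPowSum (N * G⁻¹) s₂ = eigPowSum (M * N) s := by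
  set X := N ^ (1 / 2 : ℝ) * M * N ^ (1 / 2 : ℝ) with hXdef
  have hX : X.PosDef := posDef_rpow_mul_mul_rpow hM hN (1 / 2)
  refine ⟨N ^ (1 / 2 : ℝ) * X ^ (-(s / s₂)) * N ^ (1 / 2 : ℝ),
    posDef_rpow_mul_mul_rpow (posDef_rpow hX _) hN _, ?_⟩
  have hMG : eigPowSum (M * (N ^ (1 / 2 : ℝ) * X ^ (-(s / s₂)) * N ^ (1 / 2 : ℝ))) s₁ =
      eigPowSum X s := by
    rw [eigPowSum_mul_conj, ← hXdef]
    nth_rw 1 [← rpow_one_of_posDef hX]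
    rw [rpow_mul_rpow hX, eigPowSum_rpow hX, ← hs, add_neg_cancel_right, div_mul_cancel₀ s hs₁]
  have hNG : eigPowSum (N * (N ^ (1 / 2 : ℝ) * X ^ (-(s / s₂)) * N ^ (1 / 2 : ℝ))⁻¹) s₂ =
      eigPowSum X s := by
    rw [inv_rpow_mul_mul_rpow hN, eigPowSum_mul_conj, rpow_mul_self_mul_rpow hN,
      inv_rpow_of_posDef hX, neg_neg]
    norm_num
    rw [rpow_zero_of_posDef hN, Matrix.one_mul, eigPowSum_rpow hX, div_mul_cancel₀ s hs₂]
  rw [hMG, hNG, ← add_mul, hs, one_mul, eigPowSum_mul_eq_rpow_mul_mul_rpow M hN]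

theorem le_eigPowSum_mul_inv_of_holder {r : ℝ} (hs₁ : 1 ≤ s₁) (hs : 0 < s) (hr₀ : 0 < r)
    (hr : r / s₁ + r / s = 1) (hM : M.PosDef) (hN : N.PosDef) (hG : G.PosDef) :
    s / r * eigPowSum (M * G) r - s / s₁ * eigPowSum (N * G) s₁ ≤ eigPowSum (M * N⁻¹) s := by
  have h := eigPowSum_mul_le_holder hs₁ hs hr hr₀.le hG hM hN
  rw [eigPowSum_mul_comm G M, eigPowSum_mul_comm G N] at h
  calc s / r * eigPowSum (M * G) r - s / s₁ * eigPowSum (N * G) s₁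
      ≤ s / r * (r / s₁ * eigPowSum (N * G) s₁ + r / s * eigPowSum (M * N⁻¹) s) -
        s / s₁ * eigPowSum (N * G) s₁ := by gcongr
    _ = eigPowSum (M * N⁻¹) s := by field

theorem exists_reverse_holder_eq {r : ℝ} (hs₁ : s₁ ≠ 0) (hs : s ≠ 0) (hr₀ : r ≠ 0)
    (hr : r / s₁ + r / s = 1) (hM : M.PosDef) (hN : N.PosDef) : ∃ G : Matrix n n ℂ, G.PosDef ∧
      s / r * eigPowSum (M * G) r - s / s₁ * eigPowSum (N * G) s₁ = eigPowSum (M * N⁻¹) s := by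
  set X := N ^ (-(1 / 2) : ℝ) * M * N ^ (-(1 / 2) : ℝ) with hXdef
  have hX : X.PosDef := posDef_rpow_mul_mul_rpow hM hN _
  have hexp : s / r - s / s₁ = 1 := by
    field_simp at hr ⊢
    linarith
  refine ⟨N ^ (-(1 / 2) : ℝ) * X ^ (s / s₁) * N ^ (-(1 / 2) : ℝ),
    posDef_rpow_mul_mul_rpow (posDef_rpow hX _) hN _, ?_⟩
  have hMG : eigPowSum (M * (N ^ (-(1 / 2) : ℝ) * X ^ (s / s₁) * N ^ (-(1 / 2) : ℝ))) r =
      eigPowSum X s := by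
    rw [eigPowSum_mul_conj, ← hXdef]
    nth_rw 1 [← rpow_one_of_posDef hX]
    rw [rpow_mul_rpow hX, eigPowSum_rpow hX, ← hexp, sub_add_cancel, div_mul_cancel₀ s hr₀]
  have hNG : eigPowSum (N * (N ^ (-(1 / 2) : ℝ) * X ^ (s / s₁) * N ^ (-(1 / 2) : ℝ))) s₁ =
      eigPowSum X s := by
    rw [eigPowSum_mul_conj, rpow_mul_self_mul_rpow hN]
    norm_num
    rw [rpow_zero_of_posDef hN, Matrix.one_mul, eigPowSum_rpow hX, div_mul_cancel₀ s hs₁]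
  have hMN : eigPowSum (M * N⁻¹) s = eigPowSum X s := by
    rw [inv_eq_rpow_neg_one hN, eigPowSum_mul_eq_rpow_mul_mul_rpow M (posDef_rpow hN _),
      rpow_rpow_of_posDef hN, neg_one_mul]
  rw [hMG, hNG, hMN, ← sub_mul, hexp, one_mul]

end TraceHolder

section JointConvexity

open scoped MatrixOrder

variable {E F n : Type*} [AddCommMonoid E] [Module ℝ E] [AddCommMonoid F] [Module ℝ F]
  [Fintype n] [DecidableEq n] {S : Set E} {R : Set F} {Φ : E → Matrix n n ℂ} {Ψ : F → Matrix n n ℂ}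
  {r s s₁ s₂ : ℝ}

theorem concaveOn_prod_eigPowSum_mul (hs₁ : 1 ≤ s₁) (hs₂ : 0 < s₂) (hs : s / s₁ + s / s₂ = 1)
    (hs₀ : 0 ≤ s) (hΦ : ∀ x ∈ S, (Φ x).PosDef) (hΨ : ∀ y ∈ R, (Ψ y).PosDef)
    (hΦconc : ∀ G : Matrix n n ℂ, G.PosDef → ConcaveOn ℝ S fun x => eigPowSum (Φ x * G) s₁)
    (hΨconc : ∀ G : Matrix n n ℂ, G.PosDef → ConcaveOn ℝ R fun y => eigPowSum (Ψ y * G) s₂) :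
    ConcaveOn ℝ (S ×ˢ R) fun P => eigPowSum (Φ P.1 * Ψ P.2) s := by
  have hS : Convex ℝ S := (hΦconc 1 .one).1
  have hR : Convex ℝ R := (hΨconc 1 .one).1
  have h₁ : 0 < s₁ := by linarith
  refine concaveOn_of_forall_exists_touching_majorant (hS.prod hR) fun P hP => ?_
  obtain ⟨G, hG, hGeq⟩ := exists_holder_eq h₁.ne' hs₂.ne' hs (hΦ _ hP.1) (hΨ _ hP.2)
  refine ⟨fun Q => s / s₁ * eigPowSum (Φ Q.1 * G) s₁ + s / s₂ * eigPowSum (Ψ Q.2 * G⁻¹) s₂,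
    ?_, fun Q hQ => eigPowSum_mul_le_holder hs₁ hs₂ hs hs₀ (hΦ _ hQ.1) (hΨ _ hQ.2) hG, hGeq.le⟩
  exact ((concaveOn_prod_fst (hΦconc G hG) hR).smul (by positivity)).add
    ((concaveOn_prod_snd hS (hΨconc _ hG.inv)).smul (by positivity))

theorem convexOn_prod_eigPowSum_mul_inv (hs₁ : 1 ≤ s₁) (hs : 0 < s) (hr₀ : 0 < r)
    (hr : r / s₁ + r / s = 1) (hΦ : ∀ x ∈ S, (Φ x).PosDef) (hΨ : ∀ y ∈ R, (Ψ y).PosDef)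
    (hΦconv : ∀ G : Matrix n n ℂ, G.PosDef → ConvexOn ℝ S fun x => eigPowSum (Φ x * G) r)
    (hΨconc : ∀ G : Matrix n n ℂ, G.PosDef → ConcaveOn ℝ R fun y => eigPowSum (Ψ y * G) s₁) :
    ConvexOn ℝ (S ×ˢ R) fun P => eigPowSum (Φ P.1 * (Ψ P.2)⁻¹) s := by
  have hS : Convex ℝ S := (hΦconv 1 .one).1
  have hR : Convex ℝ R := (hΨconc 1 .one).1
  have h₁ : 0 < s₁ := by linarith
  refine convexOn_of_forall_exists_touching_minorant (hS.prod hR) fun P hP => ?_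
  obtain ⟨G, hG, hGeq⟩ := exists_reverse_holder_eq h₁.ne' hs.ne' hr₀.ne' hr (hΦ _ hP.1) (hΨ _ hP.2)
  refine ⟨fun Q => s / r * eigPowSum (Φ Q.1 * G) r - s / s₁ * eigPowSum (Ψ Q.2 * G) s₁, ?_,
    fun Q hQ => le_eigPowSum_mul_inv_of_holder hs₁ hs hr₀ hr (hΦ _ hQ.1) (hΨ _ hQ.2) hG, hGeq.ge⟩
  exact ((convexOn_prod_fst (hΦconv G hG) hR).smul (by positivity)).sub
    ((concaveOn_prod_snd hS (hΨconc G hG)).smul (by positivity))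

end JointConvexity

section KrausMap

open scoped MatrixOrder

variable {ι m n : Type*} [Fintype ι] [Fintype m] [DecidableEq n] {p ε β : ℝ}

/-- The completely positive map `X ↦ ∑ i, (K i)ᴴ * X * K i` shifted by `ε`. The shift makes the
image of a positive definite matrix positive definite, whatever the Kraus operators `K i` are. -/
noncomputable def shiftedKrausMap (K : ι → Matrix m n ℂ) (ε : ℝ) (X : Matrix m m ℂ) :
    Matrix n n ℂ :=
  ∑ i, (K i)ᴴ * X * K i + ε • 1

theorem posSemidef_shiftedKrausMap [Finite n] (hε : 0 ≤ ε) (K : ι → Matrix m n ℂ) {X : Matrix m m ℂ}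
    (hX : X.PosSemidef) : (shiftedKrausMap K ε X).PosSemidef :=
  (posSemidef_sum _ fun i _ => hX.conjTranspose_mul_mul_same (K i)).add (PosSemidef.one.smul hε)

theorem posDef_shiftedKrausMap [Finite n] (hε : 0 < ε) (K : ι → Matrix m n ℂ) {X : Matrix m m ℂ}
    (hX : X.PosSemidef) : (shiftedKrausMap K ε X).PosDef :=
  .posSemidef_add (posSemidef_sum _ fun i _ => hX.conjTranspose_mul_mul_same (K i))
    (PosDef.one.smul hε)

variable [Fintype n]

theorem trace_shiftedKrausMap (K : ι → Matrix m n ℂ) (ε : ℝ) (X : Matrix m m ℂ)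
    (L Y : Matrix n n ℂ) : (Lᴴ * shiftedKrausMap K ε X * L * Y).trace.re =
      ∑ i, ((K i * L)ᴴ * X * (K i * L) * Y).trace.re + ε * (Lᴴ * L * Y).trace.re := by
  simp only [shiftedKrausMap, Matrix.mul_add, Matrix.add_mul, Matrix.mul_sum, Matrix.sum_mul,
    trace_add, trace_sum, Complex.add_re, Complex.re_sum, Matrix.mul_smul, Matrix.smul_mul,
    Matrix.mul_one, trace_smul, Complex.real_smul, Complex.re_ofReal_mul, conjTranspose_mul,
    Matrix.mul_assoc]

variable [DecidableEq m]

theorem convexOn_trace_shiftedKrausMap (hε : 0 ≤ ε)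
    (hconv : ∀ L : Matrix m n ℂ, ConvexOn ℝ (posDefCone m ×ˢ posDefCone n)
      fun P => (Lᴴ * P.1 ^ p * L * P.2 ^ β).trace.re)
    (hconv' : ∀ L : Matrix n n ℂ, ConvexOn ℝ (posDefCone n ×ˢ posDefCone n)
      fun P => (Lᴴ * P.1 ^ p * L * P.2 ^ β).trace.re)
    (K : ι → Matrix m n ℂ) (L : Matrix n n ℂ) : ConvexOn ℝ (posDefCone m ×ˢ posDefCone n)
      fun P => (Lᴴ * shiftedKrausMap K ε (P.1 ^ p) * L * P.2 ^ β).trace.re := by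
  have hone := convexOn_slice_right convex_posDefCone (hconv' L) (x := 1) PosDef.one
  simp only [CFC.one_rpow, Matrix.mul_one] at hone
  simp only [trace_shiftedKrausMap]
  exact (convexOn_sum (convex_posDefCone.prod convex_posDefCone) fun i => hconv (K i * L)).add
    ((convexOn_prod_snd convex_posDefCone hone).smul hε)

theorem concaveOn_trace_shiftedKrausMap (hε : 0 ≤ ε)
    (hconc : ∀ L : Matrix m n ℂ, ConcaveOn ℝ (posDefCone m ×ˢ posDefCone n)
      fun P => (Lᴴ * P.1 ^ p * L * P.2 ^ β).trace.re)
    (hconc' : ∀ L : Matrix n n ℂ, ConcaveOn ℝ (posDefCone n ×ˢ posDefCone n)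
      fun P => (Lᴴ * P.1 ^ p * L * P.2 ^ β).trace.re)
    (K : ι → Matrix m n ℂ) (L : Matrix n n ℂ) : ConcaveOn ℝ (posDefCone m ×ˢ posDefCone n)
      fun P => (Lᴴ * shiftedKrausMap K ε (P.1 ^ p) * L * P.2 ^ β).trace.re := by
  have hone := concaveOn_slice_right convex_posDefCone (hconc' L) (x := 1) PosDef.one
  simp only [CFC.one_rpow, Matrix.mul_one] at hone
  simp only [trace_shiftedKrausMap]
  exact (concaveOn_sum (convex_posDefCone.prod convex_posDefCone) fun i => hconc (K i * L)).add
    ((concaveOn_prod_snd convex_posDefCone hone).smul hε)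

end KrausMap

section SingleVariable

open scoped MatrixOrder

variable {ι m n : Type*} [Fintype ι] [Fintype m] [DecidableEq m] [Fintype n] [DecidableEq n]
  {p s ε : ℝ} {G : Matrix n n ℂ}

theorem one_le_one_sub_mul_div_of_mul_le_one (hs : 1 < s) (hsp : s * p ≤ 1) :
    1 - p ≠ 0 ∧ 1 ≤ (1 - p) * s / (s - 1) := by
  refine ⟨fun hp => ?_, ?_⟩
  · rw [← sub_eq_zero.mp hp, mul_one] at hsp
    exact hsp.not_gt hs
  · rw [one_le_div (by linarith)]
    linarith

theorem one_le_one_sub_mul_div_of_one_le_mul (hs : s < 1) (hsp : 1 ≤ s * p) :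
    1 - p ≠ 0 ∧ 1 ≤ (1 - p) * s / (s - 1) := by
  refine ⟨fun hp => ?_, ?_⟩
  · rw [← sub_eq_zero.mp hp, mul_one] at hsp
    exact hsp.not_gt hs
  · rw [one_le_div_of_neg (by linarith)]
    linarith

theorem concaveOn_eigPowSum_rpow_mul (hp₀ : 0 ≤ p) (hp₁ : p ≤ 1) (hs : 0 ≤ s) (hsp : s * p ≤ 1)
    (hG : G.PosDef) : ConcaveOn ℝ (posDefCone n) fun B => eigPowSum (B ^ p * G) s :=
  concaveOn_eigPowSum_mul hs
    (fun hs₁ => (one_le_one_sub_mul_div_of_mul_le_one hs₁ hsp).imp_right .inl) convex_posDefCone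
    (fun _ hB => posDef_rpow hB p) (concaveOn_trace_rpow_mul_rpow_one_sub hp₀ hp₁) hG

theorem concaveOn_eigPowSum_shiftedKrausMap_mul (hp₀ : 0 ≤ p) (hp₁ : p ≤ 1) (hs : 0 ≤ s)
    (hsp : s * p ≤ 1) (hε : 0 < ε) (K : ι → Matrix m n ℂ) (hG : G.PosDef) :
    ConcaveOn ℝ (posDefCone m) fun A => eigPowSum (shiftedKrausMap K ε (A ^ p) * G) s :=
  concaveOn_eigPowSum_mul hs
    (fun hs₁ => (one_le_one_sub_mul_div_of_mul_le_one hs₁ hsp).imp_right .inl) convex_posDefCone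
    (fun _ hA => posDef_shiftedKrausMap hε K (posDef_rpow hA p).posSemidef)
    (concaveOn_trace_shiftedKrausMap hε.le (concaveOn_trace_rpow_mul_rpow_one_sub hp₀ hp₁)
      (concaveOn_trace_rpow_mul_rpow_one_sub hp₀ hp₁) K) hG

theorem convexOn_eigPowSum_shiftedKrausMap_mul (hp₁ : 1 ≤ p) (hp₂ : p ≤ 2) (hs : 0 ≤ s)
    (hsp : 1 ≤ s * p) (hε : 0 < ε) (K : ι → Matrix m n ℂ) (hG : G.PosDef) :
    ConvexOn ℝ (posDefCone m) fun A => eigPowSum (shiftedKrausMap K ε (A ^ p) * G) s :=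
  convexOn_eigPowSum_mul hs
    (fun hs₁ => (one_le_one_sub_mul_div_of_one_le_mul hs₁ hsp).imp_right .inl) convex_posDefCone
    (fun _ hA => posDef_shiftedKrausMap hε K (posDef_rpow hA p).posSemidef)
    (convexOn_trace_shiftedKrausMap hε.le (convexOn_trace_rpow_mul_rpow_one_sub hp₁ hp₂)
      (convexOn_trace_rpow_mul_rpow_one_sub hp₁ hp₂) K) hG

theorem convexOn_eigPowSum_shiftedKrausMap_mul_of_nonpos (hp₁ : -1 ≤ p) (hp₀ : p ≤ 0) (hs : 0 ≤ s)
    (hε : 0 < ε) (K : ι → Matrix m n ℂ) (hG : G.PosDef) :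
    ConvexOn ℝ (posDefCone m) fun A => eigPowSum (shiftedKrausMap K ε (A ^ p) * G) s :=
  convexOn_eigPowSum_mul hs
    (fun hs₁ => ⟨two_ne_zero, .inr (div_nonpos_of_nonneg_of_nonpos (by positivity)
      (by linarith))⟩) convex_posDefCone
    (fun _ hA => posDef_shiftedKrausMap hε K (posDef_rpow hA p).posSemidef)
    (convexOn_trace_shiftedKrausMap hε.le (convexOn_trace_rpow_mul_sq hp₁ hp₀)
      (convexOn_trace_rpow_mul_sq hp₁ hp₀) K) hG

end SingleVariable

section TwoVariables

open scoped MatrixOrder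

variable {ι m n : Type*} [Fintype ι] [Fintype m] [DecidableEq m] [Fintype n] [DecidableEq n]
  {p q s ε : ℝ}

theorem concaveOn_eigPowSum_shiftedKrausMap_mul_rpow_of_pos (hp₀ : 0 < p) (hp₁ : p ≤ 1)
    (hq₀ : 0 < q) (hq₁ : q ≤ 1) (hs : 0 < s) (hspq : s * (p + q) ≤ 1) (hε : 0 < ε)
    (K : ι → Matrix m n ℂ) : ConcaveOn ℝ (posDefCone m ×ˢ posDefCone n)
      fun P => eigPowSum (shiftedKrausMap K ε (P.1 ^ p) * P.2 ^ q) s := by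
  have hsp : 0 < 1 - s * p := by nlinarith [mul_pos hs hq₀]
  have hs₂ : 0 < s / (1 - s * p) := by positivity
  refine concaveOn_prod_eigPowSum_mul (Φ := fun A => shiftedKrausMap K ε (A ^ p))
    (Ψ := fun B => B ^ q) (one_le_one_div hp₀ hp₁) hs₂ ?_ hs.le
    (fun A hA => posDef_shiftedKrausMap hε K (posDef_rpow hA p).posSemidef)
    (fun B hB => posDef_rpow hB q)
    (fun G => concaveOn_eigPowSum_shiftedKrausMap_mul hp₀.le hp₁ (one_div_pos.mpr hp₀).le
      (one_div_mul_cancel hp₀.ne').le hε K)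
    (fun G => concaveOn_eigPowSum_rpow_mul hq₀.le hq₁ hs₂.le ?_)
  · field_simp
    ring
  · rw [div_mul_eq_mul_div, div_le_one hsp]
    linarith

theorem concaveOn_eigPowSum_shiftedKrausMap_mul_rpow (hp₀ : 0 ≤ p) (hp₁ : p ≤ 1) (hq₀ : 0 ≤ q)
    (hq₁ : q ≤ 1) (hs : 0 < s) (hspq : s * (p + q) ≤ 1) (hε : 0 < ε) (K : ι → Matrix m n ℂ) :
    ConcaveOn ℝ (posDefCone m ×ˢ posDefCone n)
      fun P => eigPowSum (shiftedKrausMap K ε (P.1 ^ p) * P.2 ^ q) s := by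
  rcases hp₀.eq_or_lt with rfl | hp
  · have hconst : (shiftedKrausMap K ε 1).PosDef := posDef_shiftedKrausMap hε K .one
    rw [zero_add] at hspq
    refine (concaveOn_prod_snd convex_posDefCone
      (concaveOn_eigPowSum_rpow_mul hq₀ hq₁ hs.le hspq hconst)).congr fun P hP => ?_
    beta_reduce
    rw [rpow_zero_of_posDef hP.1, eigPowSum_mul_comm]
  rcases hq₀.eq_or_lt with rfl | hq
  · rw [add_zero] at hspq
    refine (concaveOn_prod_fst (concaveOn_eigPowSum_shiftedKrausMap_mul hp₀ hp₁ hs.le hspq hε K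
      .one) convex_posDefCone).congr fun P hP => ?_
    beta_reduce
    rw [rpow_zero_of_posDef hP.2]
  exact concaveOn_eigPowSum_shiftedKrausMap_mul_rpow_of_pos hp hp₁ hq hq₁ hs hspq hε K

theorem convexOn_eigPowSum_shiftedKrausMap_mul_rpow_of_nonpos (hp₁ : -1 ≤ p) (hp₀ : p ≤ 0)
    (hq₁ : -1 ≤ q) (hq₀ : q ≤ 0) (hs : 0 < s) (hε : 0 < ε) (K : ι → Matrix m n ℂ) :
    ConvexOn ℝ (posDefCone m ×ˢ posDefCone n)
      fun P => eigPowSum (shiftedKrausMap K ε (P.1 ^ p) * P.2 ^ q) s := by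
  refine (convexOn_prod_eigPowSum_mul_inv (s₁ := 1) (r := s / (1 + s)) le_rfl hs (by positivity)
    ?_ (fun A hA => posDef_shiftedKrausMap hε K (posDef_rpow hA p).posSemidef)
    (fun B hB => posDef_rpow hB (-q))
    (fun G => convexOn_eigPowSum_shiftedKrausMap_mul_of_nonpos hp₁ hp₀ (by positivity) hε K)
    (fun G => concaveOn_eigPowSum_rpow_mul (neg_nonneg.mpr hq₀) (by linarith) zero_le_one
      (by linarith))).congr fun P hP => ?_
  · field
  · beta_reduce
    rw [inv_rpow_of_posDef hP.2, neg_neg]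

theorem convexOn_eigPowSum_shiftedKrausMap_mul_rpow (hp₁ : 1 ≤ p) (hp₂ : p ≤ 2) (hq₁ : -1 ≤ q)
    (hq₀ : q ≤ 0) (hs : 0 < s) (hspq : 1 ≤ s * (p + q)) (hε : 0 < ε) (K : ι → Matrix m n ℂ) :
    ConvexOn ℝ (posDefCone m ×ˢ posDefCone n)
      fun P => eigPowSum (shiftedKrausMap K ε (P.1 ^ p) * P.2 ^ q) s := by
  rcases hq₀.eq_or_lt with rfl | hq
  · rw [add_zero] at hspq
    refine (convexOn_prod_fst (convexOn_eigPowSum_shiftedKrausMap_mul hp₁ hp₂ hs.le hspq hε K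
      .one) convex_posDefCone).congr fun P hP => ?_
    beta_reduce
    rw [rpow_zero_of_posDef hP.2]
  have hsq : 0 < 1 - s * q := by nlinarith [mul_neg_of_pos_of_neg hs hq]
  have hq' : 0 < -q := neg_pos.mpr hq
  refine (convexOn_prod_eigPowSum_mul_inv (s₁ := 1 / -q) (r := s / (1 - s * q)) ?_ hs
    (by positivity) ?_ (fun A hA => posDef_shiftedKrausMap hε K (posDef_rpow hA p).posSemidef)
    (fun B hB => posDef_rpow hB (-q))
    (fun G => convexOn_eigPowSum_shiftedKrausMap_mul hp₁ hp₂ (by positivity) ?_ hε K)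
    (fun G => concaveOn_eigPowSum_rpow_mul hq'.le (by linarith) (by positivity) ?_)).congr
    fun P hP => ?_
  · exact one_le_one_div hq' (by linarith)
  · field_simp
    ring
  · rw [div_mul_eq_mul_div, one_le_div hsq]
    linarith
  · exact (one_div_mul_cancel hq'.ne').le
  · beta_reduce
    rw [inv_rpow_of_posDef hP.2, neg_neg]

end TwoVariables

section Continuity

open Filter Topology
open scoped MatrixOrder

variable {ι m n : Type*} [Fintype ι] [Fintype m] [Fintype n] [DecidableEq n] {A : Matrix n n ℂ}
  {s : ℝ}

theorem eigPowSum_eq_trace_cfc (hA : A.IsHermitian) (s : ℝ) :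
    eigPowSum A s = (cfc (fun x : ℝ => x ^ s) A).trace.re := by
  rw [eigPowSum_eq_sum_eigenvalues hA, hA.cfc_eq, IsHermitian.cfc, Unitary.conjStarAlgAut_apply,
    trace_mul_cycle, Unitary.coe_star_mul_self, one_mul, trace_diagonal, Complex.re_sum]
  rfl

open scoped Matrix.Norms.L2Operator in
theorem continuousOn_eigPowSum (hs : 0 ≤ s) :
    ContinuousOn (fun A : Matrix n n ℂ => eigPowSum A s) {A | A.IsHermitian} := by
  have hcfc : ContinuousOn (fun A : Matrix n n ℂ => cfc (fun x : ℝ => x ^ s) A)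
      {A | A.IsHermitian} :=
    continuousOn_id.cfc_of_mem_nhdsSet (s := Set.univ) _ univ_mem (fun _ hA => hA)
      (Real.continuous_rpow_const hs).continuousOn
  exact (Complex.continuous_re.comp_continuousOn
    (continuous_id.matrix_trace.comp_continuousOn hcfc)).congr
      fun A hA => eigPowSum_eq_trace_cfc hA s

theorem tendsto_eigPowSum_shiftedKrausMap_mul (hs : 0 ≤ s) (K : ι → Matrix m n ℂ)
    {X : Matrix m m ℂ} (hX : X.PosSemidef) {G : Matrix n n ℂ} (hG : G.PosDef) :
    Tendsto (fun ε => eigPowSum (shiftedKrausMap K ε X * G) s) (𝓝[>] 0)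
      (𝓝 (eigPowSum (shiftedKrausMap K 0 X * G) s)) := by
  simp only [eigPowSum_mul_eq_rpow_mul_mul_rpow _ hG]
  have hherm : ∀ ε, 0 ≤ ε →
      (G ^ (1 / 2 : ℝ) * shiftedKrausMap K ε X * G ^ (1 / 2 : ℝ)).IsHermitian := fun ε hε => by
    have h := isHermitian_conjTranspose_mul_mul (G ^ (1 / 2 : ℝ))
      (posSemidef_shiftedKrausMap hε K hX).isHermitian
    rwa [conjTranspose_rpow hG] at h
  have hcont : Continuous fun ε =>
      G ^ (1 / 2 : ℝ) * shiftedKrausMap K ε X * G ^ (1 / 2 : ℝ) := by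
    unfold shiftedKrausMap
    fun_prop
  exact (continuousOn_eigPowSum hs _ (hherm 0 le_rfl)).tendsto.comp
    (tendsto_nhdsWithin_iff.mpr ⟨hcont.continuousAt.tendsto.mono_left nhdsWithin_le_nhds,
      eventually_mem_nhdsWithin.mono fun ε hε => hherm ε (le_of_lt hε)⟩)

end Continuity

section TraceFunctional

open Filter Topology
open scoped MatrixOrder

variable {m n₁ n₂ : Type*} [Fintype m] [Fintype n₁]

/-- The Kraus operators of `X ↦ Tr₁(K† X K)`: the blocks of `K` along the first tensor factor. -/
def ptraceKraus (K : Matrix m (n₁ × n₂) ℂ) (i : n₁) : Matrix m n₂ ℂ :=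
  of fun x j => K x (i, j)

theorem ptraceFst_conj_eq_shiftedKrausMap [Fintype n₂] [DecidableEq n₂]
    (K : Matrix m (n₁ × n₂) ℂ) (X : Matrix m m ℂ) :
    ptraceFst (Kᴴ * X * K) = shiftedKrausMap (ptraceKraus K) 0 X := by
  ext j j'
  simp [ptraceFst, shiftedKrausMap, ptraceKraus, Matrix.sum_apply, Matrix.mul_apply]

variable [DecidableEq m] [DecidableEq n₁] [Fintype n₂] [DecidableEq n₂] {p q s : ℝ}

theorem Ffun_eq_eigPowSum (hs : s ≠ 0) (K : Matrix m (n₁ × n₂) ℂ) {A : Matrix m m ℂ}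
    {B : Matrix n₂ n₂ ℂ} (hA : A.PosDef) (hB : B.PosDef) :
    Ffun K p q s A B = eigPowSum (shiftedKrausMap (ptraceKraus K) 0 (A ^ p) * B ^ q) s := by
  have hpsd := (posSemidef_shiftedKrausMap le_rfl (ptraceKraus K)
    (posDef_rpow hA p).posSemidef).conjTranspose_mul_mul_same (B ^ (q / 2))
  rw [conjTranspose_rpow hB] at hpsd
  rw [Ffun, matPow_eq_rpow hA, matPow_eq_rpow hB, ptraceFst_conj_eq_shiftedKrausMap,
    trace_matPow_re hpsd hs, eigPowSum_mul_eq_rpow_mul_mul_rpow _ (posDef_rpow hB q),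
    rpow_rpow_of_posDef hB, mul_one_div]

theorem tendsto_eigPowSum_Ffun (hs : 0 < s) (K : Matrix m (n₁ × n₂) ℂ) {A : Matrix m m ℂ}
    {B : Matrix n₂ n₂ ℂ} (hA : A.PosDef) (hB : B.PosDef) :
    Tendsto (fun ε => eigPowSum (shiftedKrausMap (ptraceKraus K) ε (A ^ p) * B ^ q) s) (𝓝[>] 0)
      (𝓝 (Ffun K p q s A B)) := by
  rw [Ffun_eq_eigPowSum hs.ne' K hA hB]
  exact tendsto_eigPowSum_shiftedKrausMap_mul hs.le _ (posDef_rpow hA p).posSemidef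
    (posDef_rpow hB q)

theorem concaveOn_Ffun (hp₀ : 0 ≤ p) (hp₁ : p ≤ 1) (hq₀ : 0 ≤ q) (hq₁ : q ≤ 1) (hs : 0 < s)
    (hspq : s * (p + q) ≤ 1) (K : Matrix m (n₁ × n₂) ℂ) :
    ConcaveOn ℝ (posDefCone m ×ˢ posDefCone n₂) fun P => Ffun K p q s P.1 P.2 :=
  concaveOn_of_tendsto (l := 𝓝[>] 0) (convex_posDefCone.prod convex_posDefCone)
    (eventually_mem_nhdsWithin.mono fun _ hε => concaveOn_eigPowSum_shiftedKrausMap_mul_rpow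
      hp₀ hp₁ hq₀ hq₁ hs hspq hε (ptraceKraus K))
    fun _ hP => tendsto_eigPowSum_Ffun hs K hP.1 hP.2

theorem convexOn_Ffun_of_nonpos (hp₁ : -1 ≤ p) (hp₀ : p ≤ 0) (hq₁ : -1 ≤ q) (hq₀ : q ≤ 0)
    (hs : 0 < s) (K : Matrix m (n₁ × n₂) ℂ) :
    ConvexOn ℝ (posDefCone m ×ˢ posDefCone n₂) fun P => Ffun K p q s P.1 P.2 :=
  convexOn_of_tendsto (l := 𝓝[>] 0) (convex_posDefCone.prod convex_posDefCone)
    (eventually_mem_nhdsWithin.mono fun _ hε =>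
      convexOn_eigPowSum_shiftedKrausMap_mul_rpow_of_nonpos hp₁ hp₀ hq₁ hq₀ hs hε (ptraceKraus K))
    fun _ hP => tendsto_eigPowSum_Ffun hs K hP.1 hP.2

theorem convexOn_Ffun (hp₁ : 1 ≤ p) (hp₂ : p ≤ 2) (hq₁ : -1 ≤ q) (hq₀ : q ≤ 0) (hs : 0 < s)
    (hspq : 1 ≤ s * (p + q)) (K : Matrix m (n₁ × n₂) ℂ) :
    ConvexOn ℝ (posDefCone m ×ˢ posDefCone n₂) fun P => Ffun K p q s P.1 P.2 :=
  convexOn_of_tendsto (l := 𝓝[>] 0) (convex_posDefCone.prod convex_posDefCone)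
    (eventually_mem_nhdsWithin.mono fun _ hε => convexOn_eigPowSum_shiftedKrausMap_mul_rpow
      hp₁ hp₂ hq₁ hq₀ hs hspq hε (ptraceKraus K))
    fun _ hP => tendsto_eigPowSum_Ffun hs K hP.1 hP.2

theorem stmt3_general (K : Matrix m (n₁ × n₂) ℂ) (p q s : ℝ) :
    (0 ≤ p ∧ p ≤ 1 ∧ 0 ≤ q ∧ q ≤ 1 ∧ 0 < s ∧ s * (p + q) ≤ 1 →
      ConcaveOn ℝ (posDefCone m ×ˢ posDefCone n₂) fun P => Ffun K p q s P.1 P.2) ∧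
    (-1 ≤ p ∧ p ≤ 0 ∧ -1 ≤ q ∧ q ≤ 0 ∧ 0 < s →
      ConvexOn ℝ (posDefCone m ×ˢ posDefCone n₂) fun P => Ffun K p q s P.1 P.2) ∧
    (1 ≤ p ∧ p ≤ 2 ∧ -1 ≤ q ∧ q ≤ 0 ∧ 0 < s ∧ 1 ≤ s * (p + q) →
      ConvexOn ℝ (posDefCone m ×ˢ posDefCone n₂) fun P => Ffun K p q s P.1 P.2) := by
  refine ⟨?_, ?_, ?_⟩
  · rintro ⟨hp₀, hp₁, hq₀, hq₁, hs, hspq⟩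
    exact concaveOn_Ffun hp₀ hp₁ hq₀ hq₁ hs hspq K
  · rintro ⟨hp₁, hp₀, hq₁, hq₀, hs⟩
    exact convexOn_Ffun_of_nonpos hp₁ hp₀ hq₁ hq₀ hs K
  · rintro ⟨hp₁, hp₂, hq₁, hq₀, hs, hspq⟩
    exact convexOn_Ffun hp₁ hp₂ hq₁ hq₀ hs hspq K

end TraceFunctional

/-- joint concavity/convexity of
`(A,B) ↦ Tr[(B^{q/2} · Tr₁(K† A^p K) · B^{q/2})^s]` in the three parameter regimes. -/
theorem stmt3 {m n₁ n₂ : Type*} [Fintype m] [DecidableEq m]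
    [Fintype n₁] [DecidableEq n₁] [Fintype n₂] [DecidableEq n₂]
    (K : Matrix m (n₁ × n₂) ℂ) (p q s : ℝ)
    (A₀ A₁ : Matrix m m ℂ) (hA₀ : A₀.PosDef) (hA₁ : A₁.PosDef)
    (B₀ B₁ : Matrix n₂ n₂ ℂ) (hB₀ : B₀.PosDef) (hB₁ : B₁.PosDef)
    (t : ℝ) (ht0 : 0 ≤ t) (ht1 : t ≤ 1) :
    ((0 ≤ q ∧ q ≤ p ∧ p ≤ 1 ∧ 0 < s ∧ s ≤ 1 / (p + q)) →
      Ffun K p q s ((t : ℂ) • A₀ + ((1 - t : ℝ) : ℂ) • A₁)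
          ((t : ℂ) • B₀ + ((1 - t : ℝ) : ℂ) • B₁) ≥
        t * Ffun K p q s A₀ B₀ + (1 - t) * Ffun K p q s A₁ B₁) ∧
    ((-1 ≤ q ∧ q ≤ p ∧ p ≤ 0 ∧ 0 < s) →
      Ffun K p q s ((t : ℂ) • A₀ + ((1 - t : ℝ) : ℂ) • A₁)
          ((t : ℂ) • B₀ + ((1 - t : ℝ) : ℂ) • B₁) ≤
        t * Ffun K p q s A₀ B₀ + (1 - t) * Ffun K p q s A₁ B₁) ∧
    ((-1 ≤ q ∧ q ≤ 0 ∧ 1 ≤ p ∧ p ≤ 2 ∧ (p, q) ≠ ((1 : ℝ), (-1 : ℝ)) ∧ 1 / (p + q) ≤ s) →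
      Ffun K p q s ((t : ℂ) • A₀ + ((1 - t : ℝ) : ℂ) • A₁)
          ((t : ℂ) • B₀ + ((1 - t : ℝ) : ℂ) • B₁) ≤
        t * Ffun K p q s A₀ B₀ + (1 - t) * Ffun K p q s A₁ B₁) := by
  obtain ⟨hconcave, hconvex_nonpos, hconvex⟩ := stmt3_general K p q s
  have hP₀ := Set.mk_mem_prod (s := posDefCone m) (t := posDefCone n₂) hA₀ hB₀
  have hP₁ := Set.mk_mem_prod (s := posDefCone m) (t := posDefCone n₂) hA₁ hB₁
  have ht : 0 ≤ 1 - t := sub_nonneg.mpr ht1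
  simp only [Complex.coe_smul]
  refine ⟨?_, ?_, ?_⟩
  · rintro ⟨hq₀, hqp, hp₁, hs, hspq⟩
    have hpq : 0 < p + q := one_div_pos.mp (hs.trans_le hspq)
    exact (hconcave ⟨hq₀.trans hqp, hp₁, hq₀, hqp.trans hp₁, hs, (le_div_iff₀ hpq).mp hspq⟩).2
      hP₀ hP₁ ht0 ht (add_sub_cancel t 1)
  · rintro ⟨hq₁, hqp, hp₀, hs⟩
    exact (hconvex_nonpos ⟨hq₁.trans hqp, hp₀, hq₁, hqp.trans hp₀, hs⟩).2
      hP₀ hP₁ ht0 ht (add_sub_cancel t 1)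
  · rintro ⟨hq₁, hq₀, hp₁, hp₂, hne, hspq⟩
    have hpq : 0 < p + q := by
      by_contra! h
      exact hne (Prod.ext (by linarith) (by linarith))
    have hs : 0 < s := (one_div_pos.mpr hpq).trans_le hspq
    exact (hconvex ⟨hp₁, hp₂, hq₁, hq₀, hs, (div_le_iff₀ hpq).mp hspq⟩).2
      hP₀ hP₁ ht0 ht (add_sub_cancel t 1)
end

section
/- Let H be a finite-dimensional Hilbert space, K an invertible matrix on H, A and B positive definite matrices on H, and p, q real. Suppose the pair (s,r) satisfies either (i) 0 < r ≤ 1, 0 < s ≤ 1/r and r·s < 1, or (ii) −1 ≤ r < 0 and s > 0. Then Tr[(A^{p/2} K B^q K† A^{p/2})^{s/(1−rs)}] = (opt_C Tr[(A^{p/2} K B^{q/2} C^r B^{q/2} K† A^{p/2})^s])^{1/(1−rs)}, where opt_C is the supremum over all density matrices C on H in case (i) and the infimum over all positive definite density matrices C on H in case (ii). -/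
open scoped Kronecker ComplexOrder
open Matrix

/-- `Φ(C) = Tr[(A^{p/2} K B^{q/2} C^r B^{q/2} K† A^{p/2})^s]` of Statement 5. -/
noncomputable def Phi5 {n : Type*} [Fintype n] [DecidableEq n]
    (K : Matrix n n ℂ) (p q r s : ℝ)
    (A B C : Matrix n n ℂ) : ℝ :=
  (Matrix.trace (matPow
    (matPow A (p / 2) * K * matPow B (q / 2) * matPow C r * matPow B (q / 2) *
      Kᴴ * matPow A (p / 2)) s)).re

/-!
With `X = A^{p/2} K B^{q/2}` both sides depend on `X` alone, and the bounds are the trace Hölder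
inequality `Tr (X C^r X†)^a ≤ (Tr (X X†)^b)^{a/b} (Tr C)^{ar}` for `1/a = 1/b + r` with `r > 0`:
directly when `r > 0`, and applied to `X C^{r/2}` with the exponent `-r` when `r < 0`.

For `r ≤ 1` it reduces to the scalar Hölder inequality by Peierls' inequality, that is, Jensen's
inequality for the diagonal entries of a functional calculus in an arbitrary orthonormal basis. If
`a ≤ 1`, take the diagonal of `X C^r X†` in the left singular basis of `X`. If `b ≥ 1`, write the
singular values of `X C^{r/2}` as diagonal entries of a product and apply the Cauchy–Schwarz
inequality. Since `a < b`, one of the two applies. Larger `r` follow by splitting off factors of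
`C`.

Equality holds in the limit `ε → 0` for `C` diagonal in the right singular basis of `X` with weights
proportional to `z^{s/(1-rs)} + ε`, where `z` are the eigenvalues of `X X†`; the shift by `ε` makes
`C` positive definite and replaces an exact optimizer, which need not exist for `r < 0`.
-/

section SpectralPowers

variable {n : Type*} [Fintype n] [DecidableEq n]

/-- The scalar function whose functional calculus is `matPow`: the real power on `(0, ∞)`, extended
by zero. It differs from `x ^ t` at `x = 0` only for `t = 0`. -/
noncomputable def posRpow (t x : ℝ) : ℝ := if 0 < x then x ^ t else 0

theorem posRpow_of_pos {x : ℝ} (hx : 0 < x) (t : ℝ) : posRpow t x = x ^ t := if_pos hx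

theorem posRpow_of_nonneg {t x : ℝ} (ht : t ≠ 0) (hx : 0 ≤ x) : posRpow t x = x ^ t := by
  rcases hx.eq_or_lt with rfl | hx
  · simp [posRpow, Real.zero_rpow ht]
  · exact posRpow_of_pos hx t

theorem posRpow_nonneg (t x : ℝ) : 0 ≤ posRpow t x := by
  unfold posRpow
  split_ifs <;> positivity

theorem posRpow_add (s t x : ℝ) : posRpow (s + t) x = posRpow s x * posRpow t x := by
  unfold posRpow
  split_ifs with hx
  · exact Real.rpow_add hx s t
  · rw [mul_zero]

theorem convexOn_posRpow {t : ℝ} (ht : 1 ≤ t) : ConvexOn ℝ (Set.Ici 0) (posRpow t) :=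
  (convexOn_rpow ht).congr fun _ hx => (posRpow_of_nonneg (by positivity) hx).symm

theorem concaveOn_posRpow {t : ℝ} (ht : 0 < t) (ht1 : t ≤ 1) :
    ConcaveOn ℝ (Set.Ici 0) (posRpow t) :=
  (Real.concaveOn_rpow ht.le ht1).congr fun _ hx => (posRpow_of_nonneg ht.ne' hx).symm

theorem continuousOn_spectrum (M : Matrix n n ℂ) (f : ℝ → ℝ) : ContinuousOn f (spectrum ℝ M) :=
  M.finite_real_spectrum.continuousOn f

theorem matPow_eq_cfc (M : Matrix n n ℂ) (t : ℝ) : matPow M t = cfc (posRpow t) M := by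
  by_cases hM : M.IsHermitian
  · rw [matPow, dif_pos hM, hM.cfc_eq]
    rfl
  · rw [matPow, dif_neg hM, cfc_apply_of_not_predicate (p := IsSelfAdjoint) M hM]

theorem posSemidef_matPow (M : Matrix n n ℂ) (t : ℝ) : (matPow M t).PosSemidef := by
  open scoped MatrixOrder in
  rw [matPow_eq_cfc, ← nonneg_iff_posSemidef]
  exact cfc_nonneg fun x _ => posRpow_nonneg t x

theorem matPow_add (M : Matrix n n ℂ) (s t : ℝ) : matPow M (s + t) = matPow M s * matPow M t := by
  simp only [matPow_eq_cfc, ← cfc_mul _ _ M (continuousOn_spectrum M _) (continuousOn_spectrum M _),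
    ← posRpow_add]

theorem matPow_zero {M : Matrix n n ℂ} (hM : M.PosDef) : matPow M 0 = 1 := by
  have hspec : (spectrum ℝ M).EqOn (posRpow 0) fun _ => 1 := by
    rw [hM.isHermitian.spectrum_real_eq_range_eigenvalues]
    rintro _ ⟨i, rfl⟩
    rw [posRpow_of_pos (hM.eigenvalues_pos i), Real.rpow_zero]
  rw [matPow_eq_cfc, cfc_congr hspec, cfc_const_one (p := IsSelfAdjoint) ℝ M hM.isHermitian]

/-- The matrix `U diag(d) U†` with eigenvalues `d` and eigenbasis the columns of `U`. -/
noncomputable def diagConj (U : unitaryGroup n ℂ) (d : n → ℝ) : Matrix n n ℂ :=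
  U * diagonal (fun i => (d i : ℂ)) * star (U : Matrix n n ℂ)

theorem star_mul_unitary_conj (U : unitaryGroup n ℂ) (M : Matrix n n ℂ) :
    star (U : Matrix n n ℂ) * (U * M * star (U : Matrix n n ℂ)) * U = M := by
  simp only [Matrix.mul_assoc, Unitary.coe_star_mul_self, Matrix.mul_one]
  rw [← Matrix.mul_assoc, Unitary.coe_star_mul_self, Matrix.one_mul]

theorem diagonal_comp_mul_eq_mul_diagonal_comp {W : Matrix n n ℂ} {a b : n → ℝ} (f : ℝ → ℝ)
    (h : diagonal (fun i => (a i : ℂ)) * W = W * diagonal fun i => (b i : ℂ)) :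
    diagonal (fun i => (f (a i) : ℂ)) * W = W * diagonal fun i => (f (b i) : ℂ) := by
  ext i j
  have hij := congr_fun₂ h i j
  rw [diagonal_mul, mul_diagonal, mul_comm] at hij ⊢
  rcases eq_or_ne (W i j) 0 with hW | hW
  · simp [hW]
  · rw [Complex.ofReal_injective (mul_left_cancel₀ hW hij)]

theorem diagConj_eq_diagConj_iff {U V : unitaryGroup n ℂ} {a b : n → ℝ} :
    diagConj U a = diagConj V b ↔
      diagonal (fun i => (a i : ℂ)) * (star U * V : unitaryGroup n ℂ) =
        (star U * V : unitaryGroup n ℂ) * diagonal fun i => (b i : ℂ) := by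
  have hU : diagConj U a =
      U * (diagonal (fun i => (a i : ℂ)) * (star U * V : unitaryGroup n ℂ)) * (star V :) := by
    rw [Submonoid.coe_mul, Matrix.mul_assoc, Matrix.mul_assoc, Matrix.mul_assoc,
      Unitary.coe_mul_star_self, Matrix.mul_one, ← Matrix.mul_assoc]
    rfl
  have hV : diagConj V b =
      U * ((star U * V : unitaryGroup n ℂ) * diagonal fun i => (b i : ℂ)) * (star V :) := by
    rw [Submonoid.coe_mul, Matrix.mul_assoc (star U :).1, ← Matrix.mul_assoc U.1,
      Unitary.coe_mul_star_self, Matrix.one_mul]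
    rfl
  rw [hU, hV, Unitary.isUnit_coe.mul_left_inj, Unitary.isUnit_coe.mul_right_inj]

theorem diagConj_comp_eq_diagConj_comp {U V : unitaryGroup n ℂ} {a b : n → ℝ} (f : ℝ → ℝ)
    (h : diagConj U a = diagConj V b) :
    (diagConj U fun i => f (a i)) = diagConj V fun i => f (b i) :=
  diagConj_eq_diagConj_iff.mpr <|
    diagonal_comp_mul_eq_mul_diagonal_comp f <| diagConj_eq_diagConj_iff.mp h

theorem diagConj_eigenvalues {M : Matrix n n ℂ} (hM : M.IsHermitian) :
    diagConj hM.eigenvectorUnitary hM.eigenvalues = M :=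
  hM.spectral_theorem.symm

theorem isHermitian_diagConj (U : unitaryGroup n ℂ) (d : n → ℝ) : (diagConj U d).IsHermitian :=
  isHermitian_mul_mul_conjTranspose _ <| isHermitian_diagonal_of_self_adjoint _ <| by
    ext i; simp

theorem cfc_diagConj (f : ℝ → ℝ) (U : unitaryGroup n ℂ) (d : n → ℝ) :
    cfc f (diagConj U d) = diagConj U fun i => f (d i) := by
  have hM := isHermitian_diagConj U d
  rw [hM.cfc_eq]
  exact diagConj_comp_eq_diagConj_comp f (diagConj_eigenvalues hM)

theorem matPow_diagConj (U : unitaryGroup n ℂ) (d : n → ℝ) (t : ℝ) :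
    matPow (diagConj U d) t = diagConj U fun i => posRpow t (d i) := by
  rw [matPow_eq_cfc, cfc_diagConj]

theorem trace_diagConj (U : unitaryGroup n ℂ) (d : n → ℝ) :
    (diagConj U d).trace = ((∑ i, d i : ℝ) : ℂ) := by
  rw [diagConj, trace_mul_cycle, Unitary.coe_star_mul_self, Matrix.one_mul, trace_diagonal,
    Complex.ofReal_sum]

theorem posDef_diagConj (U : unitaryGroup n ℂ) {d : n → ℝ} (hd : ∀ i, 0 < d i) :
    (diagConj U d).PosDef :=
  (IsUnit.posDef_star_right_conjugate_iff Unitary.isUnit_coe).mpr <|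
    PosDef.diagonal fun i => Complex.zero_lt_real.mpr (hd i)

/-- The real number `Tr M^t`. -/
noncomputable def trPow (M : Matrix n n ℂ) (t : ℝ) : ℝ := (matPow M t).trace.re

theorem trPow_nonneg (M : Matrix n n ℂ) (t : ℝ) : 0 ≤ trPow M t :=
  (Complex.nonneg_iff.mp (posSemidef_matPow M t).trace_nonneg).1

theorem trPow_diagConj (U : unitaryGroup n ℂ) (d : n → ℝ) (t : ℝ) :
    trPow (diagConj U d) t = ∑ i, posRpow t (d i) := by
  rw [trPow, matPow_diagConj, trace_diagConj, Complex.ofReal_re]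

end SpectralPowers

section DiagonalEntries

variable {l m n : Type*} [Fintype m]

theorem re_mul_conjTranspose_apply_self (P : Matrix l m ℂ) (i : l) :
    ((P * Pᴴ) i i).re = ∑ j, ‖P i j‖ ^ 2 := by
  simp only [mul_apply, conjTranspose_apply, RCLike.star_def, Complex.mul_conj, Complex.re_sum,
    Complex.ofReal_re, Complex.normSq_eq_norm_sq]

theorem re_conjTranspose_mul_apply_self (Q : Matrix m n ℂ) (j : n) :
    ((Qᴴ * Q) j j).re = ∑ i, ‖Q i j‖ ^ 2 := by
  simpa only [conjTranspose_conjTranspose, conjTranspose_apply, norm_star] using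
    re_mul_conjTranspose_apply_self Qᴴ j

theorem norm_sq_mul_apply_le (P : Matrix l m ℂ) (Q : Matrix m n ℂ) (i : l) (j : n) :
    ‖(P * Q) i j‖ ^ 2 ≤ ((P * Pᴴ) i i).re * ((Qᴴ * Q) j j).re := by
  have htriangle : ‖(P * Q) i j‖ ≤ ∑ k, ‖P i k‖ * ‖Q k j‖ := by
    simpa only [mul_apply, norm_mul] using norm_sum_le Finset.univ fun k => P i k * Q k j
  rw [re_mul_conjTranspose_apply_self, re_conjTranspose_mul_apply_self]
  exact (pow_le_pow_left₀ (norm_nonneg _) htriangle 2).trans (Finset.sum_mul_sq_le_sq_mul_sq ..)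

end DiagonalEntries

section BasisDiagonals

variable {n : Type*} [Fintype n] [DecidableEq n]

/-- The `i`-th diagonal entry `⟨uᵢ, M uᵢ⟩` of a Hermitian matrix `M` in the orthonormal basis formed
by the columns `uᵢ` of `U`; the real part makes it real valued on all matrices. -/
noncomputable def basisDiag (U : unitaryGroup n ℂ) (M : Matrix n n ℂ) (i : n) : ℝ :=
  ((star (U : Matrix n n ℂ) * M * U) i i).re

theorem sum_basisDiag (U : unitaryGroup n ℂ) (M : Matrix n n ℂ) :
    ∑ i, basisDiag U M i = M.trace.re := by
  have htrace : (star (U : Matrix n n ℂ) * M * U).trace = M.trace := by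
    rw [trace_mul_cycle, ← Unitary.coe_star, Unitary.coe_mul_star_self, Matrix.one_mul]
  rw [← htrace, trace, Complex.re_sum]
  rfl

theorem basisDiag_nonneg (U : unitaryGroup n ℂ) {M : Matrix n n ℂ} (hM : M.PosSemidef) (i : n) :
    0 ≤ basisDiag U M i :=
  (Complex.nonneg_iff.mp (hM.conjTranspose_mul_mul_same (U : Matrix n n ℂ)).diag_nonneg).1

theorem basisDiag_diagConj (U V : unitaryGroup n ℂ) (d : n → ℝ) (i : n) :
    basisDiag U (diagConj V d) i = ∑ j, ‖(star U * V) i j‖ ^ 2 * d j := by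
  have hconj : star (U : Matrix n n ℂ) * diagConj V d * U =
      (star U * V : unitaryGroup n ℂ) * diagonal (fun j => (d j : ℂ)) *
        star ((star U * V : unitaryGroup n ℂ) : Matrix n n ℂ) := by
    simp only [diagConj, Submonoid.coe_mul, Unitary.coe_star, star_mul, star_star, Matrix.mul_assoc]
  rw [basisDiag, hconj, mul_apply, Complex.re_sum]
  refine Finset.sum_congr rfl fun j _ => ?_
  rw [mul_diagonal, star_apply, mul_right_comm, RCLike.star_def, Complex.mul_conj,
    ← Complex.ofReal_mul, Complex.ofReal_re, Complex.normSq_eq_norm_sq]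

theorem sum_norm_sq_row (W : unitaryGroup n ℂ) (i : n) : ∑ j, ‖W i j‖ ^ 2 = 1 := by
  have hrow : (W : Matrix n n ℂ) * (W : Matrix n n ℂ)ᴴ = 1 := Unitary.coe_mul_star_self W
  rw [← re_mul_conjTranspose_apply_self, hrow, one_apply_eq, Complex.one_re]

theorem map_basisDiag_le_basisDiag_cfc {f : ℝ → ℝ} {S : Set ℝ} (hf : ConvexOn ℝ S f)
    (U : unitaryGroup n ℂ) {M : Matrix n n ℂ} (hM : M.IsHermitian) (hS : spectrum ℝ M ⊆ S) (i : n) :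
    f (basisDiag U M i) ≤ basisDiag U (cfc f M) i := by
  rw [← diagConj_eigenvalues hM, cfc_diagConj, basisDiag_diagConj, basisDiag_diagConj]
  exact hf.map_sum_le (fun j _ => sq_nonneg _) (sum_norm_sq_row _ i)
    fun j _ => hS (hM.eigenvalues_mem_spectrum_real j)

theorem basisDiag_cfc_le_map_basisDiag {f : ℝ → ℝ} {S : Set ℝ} (hf : ConcaveOn ℝ S f)
    (U : unitaryGroup n ℂ) {M : Matrix n n ℂ} (hM : M.IsHermitian) (hS : spectrum ℝ M ⊆ S) (i : n) :
    basisDiag U (cfc f M) i ≤ f (basisDiag U M i) := by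
  rw [← diagConj_eigenvalues hM, cfc_diagConj, basisDiag_diagConj, basisDiag_diagConj]
  exact hf.le_map_sum (fun j _ => sq_nonneg _) (sum_norm_sq_row _ i)
    fun j _ => hS (hM.eigenvalues_mem_spectrum_real j)

theorem spectrum_subset_Ici {M : Matrix n n ℂ} (hM : M.PosSemidef) :
    spectrum ℝ M ⊆ Set.Ici 0 := by
  rw [hM.isHermitian.spectrum_real_eq_range_eigenvalues]
  rintro _ ⟨i, rfl⟩
  exact hM.eigenvalues_nonneg i

theorem basisDiag_matPow_le {C : Matrix n n ℂ} (hC : C.PosSemidef) {r : ℝ} (hr : 0 < r)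
    (hr1 : r ≤ 1) (U : unitaryGroup n ℂ) (i : n) :
    basisDiag U (matPow C r) i ≤ basisDiag U C i ^ r := by
  rw [matPow_eq_cfc, ← posRpow_of_nonneg hr.ne' (basisDiag_nonneg U hC i)]
  exact basisDiag_cfc_le_map_basisDiag (concaveOn_posRpow hr hr1) U hC.isHermitian
    (spectrum_subset_Ici hC) i

theorem trPow_le_sum_basisDiag_rpow {M : Matrix n n ℂ} (hM : M.PosSemidef) {a : ℝ} (ha : 0 < a)
    (ha1 : a ≤ 1) (U : unitaryGroup n ℂ) : trPow M a ≤ ∑ i, basisDiag U M i ^ a := by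
  rw [trPow, ← sum_basisDiag U]
  exact Finset.sum_le_sum fun i _ => basisDiag_matPow_le hM ha ha1 U i

theorem sum_basisDiag_rpow_le_trPow {M : Matrix n n ℂ} (hM : M.PosSemidef) {a : ℝ} (ha : 1 ≤ a)
    (U : unitaryGroup n ℂ) : ∑ i, basisDiag U M i ^ a ≤ trPow M a := by
  rw [trPow, ← sum_basisDiag U, matPow_eq_cfc]
  refine Finset.sum_le_sum fun i _ => ?_
  rw [← posRpow_of_nonneg (by positivity) (basisDiag_nonneg U hM i)]
  exact map_basisDiag_le_basisDiag_cfc (convexOn_posRpow ha) U hM.isHermitian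
    (spectrum_subset_Ici hM) i

end BasisDiagonals

section SingularValueDecomposition

variable {n : Type*} [Fintype n] [DecidableEq n]

/-- `X = V diag(σ) E†` is a singular value decomposition of the square matrix `X`; the singular
values `σ` are not sorted. -/
structure IsSVD (X : Matrix n n ℂ) (V : unitaryGroup n ℂ) (σ : n → ℝ) (E : unitaryGroup n ℂ) :
    Prop where
  nonneg : ∀ i, 0 ≤ σ i
  eq : X = V * diagonal (fun i => (σ i : ℂ)) * star (E : Matrix n n ℂ)

theorem exists_eq_unitary_mul_diagonal {Y : Matrix n n ℂ} {σ : n → ℝ}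
    (hY : Yᴴ * Y = diagonal fun i => ((σ i ^ 2 : ℝ) : ℂ)) :
    ∃ V : unitaryGroup n ℂ, Y = V * diagonal fun i => (σ i : ℂ) := by
  let v : n → EuclideanSpace ℂ n := fun j => WithLp.toLp 2 fun i => Y i j / σ j
  have hinner (i j : n) : inner ℂ (v i) (v j) = (Yᴴ * Y) i j / (σ i * σ j) := by
    simp only [v, PiLp.inner_apply, mul_apply, conjTranspose_apply, Finset.sum_div,
      RCLike.inner_apply, map_div₀, Complex.conj_ofReal, RCLike.star_def]
    exact Finset.sum_congr rfl fun k _ => by rw [div_mul_div_comm]; ring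
  have horth : Orthonormal ℂ ({j | σ j ≠ 0}.domRestrict v) := by
    rw [orthonormal_iff_ite]
    rintro ⟨i, hi⟩ ⟨j, hj⟩
    have hi' : (σ i : ℂ) ≠ 0 := Complex.ofReal_ne_zero.mpr hi
    simp only [Set.domRestrict_apply, hinner, hY, diagonal_apply, Subtype.mk.injEq]
    split_ifs with hij
    · subst hij
      push_cast
      field_simp
    · rw [zero_div]
  obtain ⟨b, hb⟩ := horth.exists_orthonormalBasis_extension_of_card_eq (by simp)
  refine ⟨⟨(EuclideanSpace.basisFun n ℂ).toBasis.toMatrix b,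
    OrthonormalBasis.toMatrix_orthonormalBasis_mem_unitary _ _⟩, ?_⟩
  ext i j
  rw [mul_diagonal]
  by_cases hj : σ j = 0
  · have hcol : ∑ k, ‖Y k j‖ ^ 2 = 0 := by
      rw [← re_conjTranspose_mul_apply_self, hY, diagonal_apply_eq, hj]
      simp
    have hij := (Finset.sum_eq_zero_iff_of_nonneg fun k _ => sq_nonneg ‖Y k j‖).mp hcol i
    simpa [hj] using hij
  · have hbj : (b j).ofLp i = Y i j / σ j := by rw [hb j hj]
    simp [Module.Basis.toMatrix_apply, hbj, hj]

theorem exists_isSVD (X : Matrix n n ℂ) : ∃ V σ E, IsSVD X V σ E := by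
  have hpos : (Xᴴ * X).PosSemidef := posSemidef_conjTranspose_mul_self X
  let E := hpos.isHermitian.eigenvectorUnitary
  let z := hpos.isHermitian.eigenvalues
  have hY : (X * (E : Matrix n n ℂ))ᴴ * (X * (E : Matrix n n ℂ)) =
      diagonal fun i => ((√(z i) ^ 2 : ℝ) : ℂ) := by
    simp only [Real.sq_sqrt (hpos.eigenvalues_nonneg _), z]
    calc (X * (E : Matrix n n ℂ))ᴴ * (X * (E : Matrix n n ℂ))
      _ = star (E : Matrix n n ℂ) * (Xᴴ * X) * E := by
        simp only [conjTranspose_mul, star_eq_conjTranspose, Matrix.mul_assoc]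
      _ = diagonal fun i => (z i : ℂ) := by
        rw [← Unitary.conjStarAlgAut_star_apply (S := ℂ)]
        exact hpos.isHermitian.conjStarAlgAut_star_eigenvectorUnitary
  obtain ⟨V, hV⟩ := exists_eq_unitary_mul_diagonal hY
  refine ⟨V, fun i => √(z i), E, fun i => Real.sqrt_nonneg _, ?_⟩
  rw [← hV, Matrix.mul_assoc, ← Unitary.coe_star, Unitary.coe_mul_star_self, Matrix.mul_one]

namespace IsSVD

variable {X : Matrix n n ℂ} {V E : unitaryGroup n ℂ} {σ : n → ℝ}

theorem star_mul_mul (h : IsSVD X V σ E) :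
    star (V : Matrix n n ℂ) * X * E = diagonal fun i => (σ i : ℂ) := by
  rw [h.eq, Matrix.mul_assoc, Matrix.mul_assoc, Unitary.coe_star_mul_self, Matrix.mul_one,
    ← Matrix.mul_assoc, Unitary.coe_star_mul_self, Matrix.one_mul]

theorem conj_eq (h : IsSVD X V σ E) (D : Matrix n n ℂ) :
    X * D * Xᴴ = V * (diagonal (fun i => (σ i : ℂ)) * (star (E : Matrix n n ℂ) * D * E) *
      diagonal fun i => (σ i : ℂ)) * star (V : Matrix n n ℂ) := by
  have hσ : star (fun i => (σ i : ℂ)) = fun i => (σ i : ℂ) := by ext; simp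
  rw [h.eq]
  simp only [conjTranspose_mul, diagonal_conjTranspose, hσ, star_eq_conjTranspose,
    conjTranspose_conjTranspose, Matrix.mul_assoc]

theorem basisDiag_conj (h : IsSVD X V σ E) (D : Matrix n n ℂ) (i : n) :
    basisDiag V (X * D * Xᴴ) i = σ i ^ 2 * basisDiag E D i := by
  rw [basisDiag, h.conj_eq, star_mul_unitary_conj, mul_diagonal, diagonal_mul, basisDiag,
    mul_right_comm, ← Complex.ofReal_mul, Complex.re_ofReal_mul, sq]

theorem conj_diagConj (h : IsSVD X V σ E) (d : n → ℝ) :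
    X * diagConj E d * Xᴴ = diagConj V fun i => σ i ^ 2 * d i := by
  rw [h.conj_eq, diagConj, star_mul_unitary_conj, diagonal_mul_diagonal, diagonal_mul_diagonal,
    diagConj]
  congr! 4 with i
  push_cast
  ring

theorem mul_conjTranspose (h : IsSVD X V σ E) :
    X * Xᴴ = diagConj V fun i => σ i ^ 2 := by
  have hone : diagConj E (fun _ => 1) = 1 := by simp [diagConj]
  simpa [hone] using h.conj_diagConj fun _ => 1

theorem trPow_mul_conjTranspose (h : IsSVD X V σ E) {t : ℝ} (ht : t ≠ 0) :
    trPow (X * Xᴴ) t = ∑ i, (σ i ^ 2) ^ t := by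
  rw [h.mul_conjTranspose, trPow_diagConj]
  exact Finset.sum_congr rfl fun i _ => posRpow_of_nonneg ht (sq_nonneg _)

end IsSVD

end SingularValueDecomposition

section HolderTraceInequality

variable {n : Type*} [Fintype n] [DecidableEq n]

theorem sum_rpow_le_of_le_mul_rpow {ι : Type*} (S : Finset ι) {y z c : ι → ℝ} {a b r : ℝ}
    (h : b.HolderTriple r⁻¹ a) (hy : ∀ i, 0 ≤ y i) (hz : ∀ i, 0 ≤ z i) (hc : ∀ i, 0 ≤ c i)
    (hyzc : ∀ i, y i ≤ z i * c i ^ r) :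
    ∑ i ∈ S, y i ^ a ≤ (∑ i ∈ S, z i ^ b) ^ (a / b) * (∑ i ∈ S, c i) ^ (a * r) := by
  have hr : r ≠ 0 := (inv_pos.mp h.symm.pos).ne'
  have ha : 0 ≤ a := h.pos'.le
  calc ∑ i ∈ S, y i ^ a
    _ ≤ ∑ i ∈ S, (z i * c i ^ r) ^ a :=
      Finset.sum_le_sum fun i _ => Real.rpow_le_rpow (hy i) (hyzc i) ha
    _ ≤ (∑ i ∈ S, z i ^ b) ^ (a / b) * (∑ i ∈ S, (c i ^ r) ^ r⁻¹) ^ (a / r⁻¹) :=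
      Real.Lr_rpow_le_Lp_mul_Lq_of_nonneg S h (fun i _ => hz i)
        fun i _ => Real.rpow_nonneg (hc i) r
    _ = (∑ i ∈ S, z i ^ b) ^ (a / b) * (∑ i ∈ S, c i) ^ (a * r) := by
      simp only [Real.rpow_rpow_inv (hc _) hr, div_inv_eq_mul]

theorem conjTranspose_matPow (M : Matrix n n ℂ) (t : ℝ) : (matPow M t)ᴴ = matPow M t :=
  (posSemidef_matPow M t).isHermitian

theorem mul_matPow_half_conj (X D M : Matrix n n ℂ) (u : ℝ) :
    X * matPow M (u / 2) * D * (X * matPow M (u / 2))ᴴ =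
      X * (matPow M (u / 2) * D * matPow M (u / 2)) * Xᴴ := by
  simp only [conjTranspose_mul, conjTranspose_matPow, Matrix.mul_assoc]

theorem mul_matPow_half_mul_conjTranspose (X M : Matrix n n ℂ) (u : ℝ) :
    X * matPow M (u / 2) * (X * matPow M (u / 2))ᴴ = X * matPow M u * Xᴴ := by
  simpa only [Matrix.mul_one, ← matPow_add, add_halves] using mul_matPow_half_conj X 1 M u

theorem mul_matPow_half_conj_matPow (X M : Matrix n n ℂ) (u v : ℝ) :
    X * matPow M (u / 2) * matPow M v * (X * matPow M (u / 2))ᴴ = X * matPow M (u + v) * Xᴴ := by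
  rw [mul_matPow_half_conj, ← matPow_add, ← matPow_add, add_right_comm, add_halves]

variable {C : Matrix n n ℂ} {a b r : ℝ}

theorem trPow_conj_matPow_le_of_le_one (X : Matrix n n ℂ) (hC : C.PosSemidef)
    (h : b.HolderTriple r⁻¹ a) (hr : r ≤ 1) (ha : a ≤ 1) :
    trPow (X * matPow C r * Xᴴ) a ≤ trPow (X * Xᴴ) b ^ (a / b) * C.trace.re ^ (a * r) := by
  obtain ⟨V, σ, E, hX⟩ := exists_isSVD X
  have hr0 : 0 < r := inv_pos.mp h.symm.pos
  have hpos := (posSemidef_matPow C r).mul_mul_conjTranspose_same X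
  refine (trPow_le_sum_basisDiag_rpow hpos h.pos' ha V).trans ?_
  rw [hX.trPow_mul_conjTranspose h.ne_zero, ← sum_basisDiag E C]
  refine sum_rpow_le_of_le_mul_rpow _ h (basisDiag_nonneg V hpos) (fun i => sq_nonneg (σ i))
    (basisDiag_nonneg E hC) fun i => ?_
  rw [hX.basisDiag_conj]
  exact mul_le_mul_of_nonneg_left (basisDiag_matPow_le hC hr0 hr E i) (sq_nonneg _)

theorem IsSVD.sq_le_basisDiag_mul_basisDiag {P Q : Matrix n n ℂ} {V E : unitaryGroup n ℂ}
    {σ : n → ℝ} (h : IsSVD (P * Q) V σ E) (i : n) :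
    σ i ^ 2 ≤ basisDiag V (P * Pᴴ) i * basisDiag E (Qᴴ * Q) i := by
  have hσ : (star (V : Matrix n n ℂ) * P * (Q * E)) i i = σ i := by
    rw [← diagonal_apply_eq (fun i => (σ i : ℂ)) i, ← h.star_mul_mul]
    simp only [Matrix.mul_assoc]
  have hCS := norm_sq_mul_apply_le (star (V : Matrix n n ℂ) * P) (Q * (E : Matrix n n ℂ)) i i
  rw [hσ, Complex.norm_real, Real.norm_eq_abs, sq_abs] at hCS
  simpa only [basisDiag, star_eq_conjTranspose, conjTranspose_mul, conjTranspose_conjTranspose,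
    Matrix.mul_assoc] using hCS

theorem trPow_conj_matPow_le_of_one_le (X : Matrix n n ℂ) (hC : C.PosSemidef)
    (h : b.HolderTriple r⁻¹ a) (hr : r ≤ 1) (hb : 1 ≤ b) :
    trPow (X * matPow C r * Xᴴ) a ≤ trPow (X * Xᴴ) b ^ (a / b) * C.trace.re ^ (a * r) := by
  obtain ⟨W, σ, E, hXC⟩ := exists_isSVD (X * matPow C (r / 2))
  have hr0 : 0 < r := inv_pos.mp h.symm.pos
  have hpos : (X * Xᴴ).PosSemidef := posSemidef_self_mul_conjTranspose X
  have hσ (i : n) : σ i ^ 2 ≤ basisDiag W (X * Xᴴ) i * basisDiag E C i ^ r := by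
    have hCr : (matPow C (r / 2))ᴴ * matPow C (r / 2) = matPow C r := by
      rw [conjTranspose_matPow, ← matPow_add, add_halves]
    have hle := hXC.sq_le_basisDiag_mul_basisDiag i
    rw [hCr] at hle
    exact hle.trans <| mul_le_mul_of_nonneg_left (basisDiag_matPow_le hC hr0 hr E i)
      (basisDiag_nonneg W hpos i)
  rw [← mul_matPow_half_mul_conjTranspose, hXC.trPow_mul_conjTranspose h.ne_zero',
    ← sum_basisDiag E C]
  refine (sum_rpow_le_of_le_mul_rpow _ h (fun i => sq_nonneg (σ i)) (basisDiag_nonneg W hpos)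
    (basisDiag_nonneg E hC) hσ).trans ?_
  gcongr
  · exact Real.rpow_nonneg (Finset.sum_nonneg fun i _ => basisDiag_nonneg E hC i) _
  · exact Finset.sum_nonneg fun i _ => Real.rpow_nonneg (basisDiag_nonneg W hpos i) _
  · exact div_nonneg h.pos'.le h.pos.le
  · exact sum_basisDiag_rpow_le_trPow hpos hb W

theorem trPow_conj_matPow_add_le {X : Matrix n n ℂ} {c u v : ℝ} (hC : C.PosSemidef)
    (hu : b.HolderTriple u⁻¹ c) (hv : c.HolderTriple v⁻¹ a)
    (hleu : trPow (X * matPow C u * Xᴴ) c ≤ trPow (X * Xᴴ) b ^ (c / b) * C.trace.re ^ (c * u))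
    (hlev : trPow (X * matPow C (u / 2) * matPow C v * (X * matPow C (u / 2))ᴴ) a ≤
      trPow (X * matPow C (u / 2) * (X * matPow C (u / 2))ᴴ) c ^ (a / c) *
        C.trace.re ^ (a * v)) :
    trPow (X * matPow C (u + v) * Xᴴ) a ≤
      trPow (X * Xᴴ) b ^ (a / b) * C.trace.re ^ (a * (u + v)) := by
  rw [mul_matPow_half_conj_matPow, mul_matPow_half_mul_conjTranspose] at hlev
  have hu0 : 0 ≤ u := inv_nonneg.mp hu.symm.nonneg
  have hv0 : 0 ≤ v := inv_nonneg.mp hv.symm.nonneg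
  have htr : 0 ≤ C.trace.re := (Complex.nonneg_iff.mp hC.trace_nonneg).1
  have hac : 0 ≤ a / c := div_nonneg hv.nonneg' hv.nonneg
  calc trPow (X * matPow C (u + v) * Xᴴ) a
    _ ≤ (trPow (X * Xᴴ) b ^ (c / b) * C.trace.re ^ (c * u)) ^ (a / c) * C.trace.re ^ (a * v) :=
      hlev.trans <| mul_le_mul_of_nonneg_right
        (Real.rpow_le_rpow (trPow_nonneg _ _) hleu hac) (Real.rpow_nonneg htr _)
    _ = trPow (X * Xᴴ) b ^ (a / b) * (C.trace.re ^ (a * u) * C.trace.re ^ (a * v)) := by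
      rw [Real.mul_rpow (Real.rpow_nonneg (trPow_nonneg _ _) _) (Real.rpow_nonneg htr _),
        ← Real.rpow_mul (trPow_nonneg _ _), ← Real.rpow_mul htr, mul_assoc,
        div_mul_div_cancel₀' hv.ne_zero, mul_right_comm, mul_div_cancel₀ _ hv.ne_zero]
    _ = trPow (X * Xᴴ) b ^ (a / b) * C.trace.re ^ (a * (u + v)) := by
      rw [mul_add, Real.rpow_add_of_nonneg htr (mul_nonneg hv.nonneg' hu0)
        (mul_nonneg hv.nonneg' hv0)]

theorem trPow_conj_matPow_le_of_le_natCast_add_one (m : ℕ) (X : Matrix n n ℂ) (hC : C.PosSemidef)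
    (h : b.HolderTriple r⁻¹ a) (hr : r ≤ m + 1) :
    trPow (X * matPow C r * Xᴴ) a ≤ trPow (X * Xᴴ) b ^ (a / b) * C.trace.re ^ (a * r) := by
  induction m generalizing X a b r with
  | zero =>
    have hr1 : r ≤ 1 := by simpa using hr
    rcases le_total 1 b with hb | hb
    · exact trPow_conj_matPow_le_of_one_le X hC h hr1 hb
    · exact trPow_conj_matPow_le_of_le_one X hC h hr1 (h.lt.le.trans hb)
  | succ m ih =>
    rcases le_or_gt r 1 with hr1 | hr1
    · exact ih X h (hr1.trans (le_add_of_nonneg_left m.cast_nonneg))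
    obtain ⟨v, rfl⟩ : ∃ v, r = 1 + v := ⟨r - 1, by ring⟩
    obtain ⟨c, hu⟩ : ∃ c, b.HolderTriple 1⁻¹ c := ⟨_, .of_pos h.pos (by simp)⟩
    have hv : c.HolderTriple v⁻¹ a :=
      ⟨by simpa only [hu.inv_eq, inv_inv, add_assoc] using h.inv_add_inv_eq_inv, hu.pos',
        inv_pos.mpr (by linarith)⟩
    have hvm : v ≤ m + 1 := by push_cast at hr; linarith
    exact trPow_conj_matPow_add_le hC hu hv (ih X hu (by simp)) (ih _ hv hvm)

theorem trPow_conj_matPow_le (X : Matrix n n ℂ) (hC : C.PosSemidef) (h : b.HolderTriple r⁻¹ a) :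
    trPow (X * matPow C r * Xᴴ) a ≤ trPow (X * Xᴴ) b ^ (a / b) * C.trace.re ^ (a * r) := by
  obtain ⟨m, hm⟩ := exists_nat_ge r
  exact trPow_conj_matPow_le_of_le_natCast_add_one m X hC h (hm.trans (lt_add_one _).le)

end HolderTraceInequality

section RealPowers

open Filter Topology

variable {z s t u ε : ℝ}

theorem rpow_mul_rpow_rpow_of_add_eq (hz : 0 ≤ z) (ht : t ≠ 0) (hstu : s + t * u = t) :
    z ^ s * (z ^ t) ^ u = z ^ t := by
  rw [← Real.rpow_mul hz, ← Real.rpow_add' hz (by rwa [hstu]), hstu]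

theorem rpow_le_rpow_mul_add_rpow (hz : 0 ≤ z) (ht : t ≠ 0) (hstu : s + t * u = t) (hu : 0 ≤ u)
    (hε : 0 ≤ ε) : z ^ t ≤ z ^ s * (z ^ t + ε) ^ u :=
  calc z ^ t
    _ = z ^ s * (z ^ t) ^ u := (rpow_mul_rpow_rpow_of_add_eq hz ht hstu).symm
    _ ≤ z ^ s * (z ^ t + ε) ^ u := by
      gcongr
      exact le_add_of_nonneg_right hε

theorem rpow_mul_add_rpow_le_rpow (hz : 0 ≤ z) (hs : s ≠ 0) (ht : t ≠ 0) (hstu : s + t * u = t)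
    (hu : u ≤ 0) (hε : 0 ≤ ε) : z ^ s * (z ^ t + ε) ^ u ≤ z ^ t := by
  rcases hz.eq_or_lt with rfl | hz
  · simp [Real.zero_rpow hs, Real.zero_rpow ht]
  calc z ^ s * (z ^ t + ε) ^ u
    _ ≤ z ^ s * (z ^ t) ^ u := by
      gcongr z ^ s * ?_
      exact Real.rpow_le_rpow_of_nonpos (by positivity) (le_add_of_nonneg_right hε) hu
    _ = z ^ t := rpow_mul_rpow_rpow_of_add_eq hz.le ht hstu

theorem tendsto_mul_add_mul_rpow_neg {T u : ℝ} (hT : 0 ≤ T) (hu : u ≠ 1) (k : ℝ) :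
    Tendsto (fun ε : ℝ => T * (T + k * ε) ^ (-u)) (𝓝[>] 0) (𝓝 (T ^ (1 - u))) := by
  rcases hT.eq_or_lt with rfl | hT
  · simp [Real.zero_rpow (sub_ne_zero.mpr hu.symm)]
  have hcont : ContinuousAt (fun ε : ℝ => T * (T + k * ε) ^ (-u)) 0 := by
    refine continuousAt_const.mul (ContinuousAt.rpow_const (by fun_prop) (Or.inl ?_))
    simpa using hT.ne'
  have hzero : T * (T + k * 0) ^ (-u) = T ^ (1 - u) := by
    rw [mul_zero, add_zero, sub_eq_add_neg, Real.rpow_add hT, Real.rpow_one]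
  exact (hzero ▸ hcont.tendsto).mono_left nhdsWithin_le_nhds

end RealPowers

section PerturbedWeights

variable {n : Type*} [Fintype n]

/-- The probability weights proportional to `w + ε`, the eigenvalues of the near-optimal density
matrices. The shift by `ε > 0` makes them positive where `w` vanishes. -/
noncomputable def perturbedWeights (w : n → ℝ) (ε : ℝ) (i : n) : ℝ := (w i + ε) / ∑ j, (w j + ε)

theorem perturbedWeights_pos {w : n → ℝ} (hw : ∀ i, 0 ≤ w i) {ε : ℝ} (hε : 0 < ε) (i : n) :
    0 < perturbedWeights w ε i := by
  have hpos (j : n) : 0 < w j + ε := add_pos_of_nonneg_of_pos (hw j) hε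
  exact div_pos (hpos i) (Finset.sum_pos (fun j _ => hpos j) ⟨i, Finset.mem_univ i⟩)

theorem sum_perturbedWeights [Nonempty n] {w : n → ℝ} (hw : ∀ i, 0 ≤ w i) {ε : ℝ} (hε : 0 < ε) :
    ∑ i, perturbedWeights w ε i = 1 := by
  have hpos (j : n) : 0 < w j + ε := add_pos_of_nonneg_of_pos (hw j) hε
  simp only [perturbedWeights, ← Finset.sum_div]
  exact div_self (Finset.sum_pos (fun j _ => hpos j) Finset.univ_nonempty).ne'

theorem mul_perturbedWeights_rpow_rpow {w : n → ℝ} (hw : ∀ i, 0 ≤ w i) {ε : ℝ} (hε : 0 < ε)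
    {z : ℝ} (hz : 0 ≤ z) (r s : ℝ) (i : n) :
    (z * perturbedWeights w ε i ^ r) ^ s =
      z ^ s * (w i + ε) ^ (r * s) * (∑ j, w j + Fintype.card n * ε) ^ (-(r * s)) := by
  have hpos (j : n) : 0 < w j + ε := add_pos_of_nonneg_of_pos (hw j) hε
  have hsum : ∑ j, w j + Fintype.card n * ε = ∑ j, (w j + ε) := by
    rw [Finset.sum_add_distrib, Finset.sum_const, Finset.card_univ, nsmul_eq_mul]
  have hsum0 : 0 ≤ ∑ j, (w j + ε) := Finset.sum_nonneg fun j _ => (hpos j).le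
  have hd := perturbedWeights_pos hw hε i
  rw [Real.mul_rpow hz (Real.rpow_nonneg hd.le r), ← Real.rpow_mul hd.le, perturbedWeights,
    Real.div_rpow (hpos i).le hsum0, hsum, Real.rpow_neg hsum0, div_eq_mul_inv, mul_assoc]

end PerturbedWeights

section VariationalFormula

variable {n : Type*} [Fintype n] [DecidableEq n] {r s t : ℝ}

theorem trPow_conj_matPow_le_of_isDensity (X : Matrix n n ℂ) {C : Matrix n n ℂ} (hC : IsDensity C)
    (hr : 0 < r) (hs : 0 < s) (hrs : r * s < 1) :
    trPow (X * matPow C r * Xᴴ) s ≤ trPow (X * Xᴴ) (s / (1 - r * s)) ^ (1 - r * s) := by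
  have hrs' : 0 < 1 - r * s := sub_pos.mpr hrs
  have hexp : (s / (1 - r * s)).HolderTriple r⁻¹ s :=
    ⟨by field_simp; ring, div_pos hs hrs', inv_pos.mpr hr⟩
  simpa only [hC.2, Complex.one_re, Real.one_rpow, mul_one, div_div_cancel₀ hs.ne'] using
    trPow_conj_matPow_le X hC.1 hexp

theorem trPow_rpow_le_trPow_conj_matPow (X : Matrix n n ℂ) {C : Matrix n n ℂ} (hC : C.PosDef)
    (htr : C.trace = 1) (hr : r < 0) (hs : 0 < s) :
    trPow (X * Xᴴ) (s / (1 - r * s)) ^ (1 - r * s) ≤ trPow (X * matPow C r * Xᴴ) s := by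
  have hrs : 0 < 1 - r * s := by nlinarith
  have hexp : s.HolderTriple (-r)⁻¹ (s / (1 - r * s)) :=
    ⟨by field_simp; ring, hs, inv_pos.mpr (neg_pos.mpr hr)⟩
  have hle := trPow_conj_matPow_le (X * matPow C (r / 2)) hC.posSemidef hexp
  rw [mul_matPow_half_conj_matPow, mul_matPow_half_mul_conjTranspose, add_neg_cancel,
    matPow_zero hC, Matrix.mul_one, htr, Complex.one_re, Real.one_rpow, mul_one,
    div_div_cancel_left' hs.ne'] at hle
  exact (Real.le_rpow_inv_iff_of_pos (trPow_nonneg _ _) (trPow_nonneg _ _) hrs).mp hle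

theorem IsSVD.trPow_conj_matPow_diagConj {X : Matrix n n ℂ} {V E : unitaryGroup n ℂ} {σ : n → ℝ}
    (h : IsSVD X V σ E) {d : n → ℝ} (hd : ∀ i, 0 < d i) (hs : s ≠ 0) :
    trPow (X * matPow (diagConj E d) r * Xᴴ) s = ∑ i, (σ i ^ 2 * d i ^ r) ^ s := by
  rw [matPow_diagConj, h.conj_diagConj, trPow_diagConj]
  refine Finset.sum_congr rfl fun i _ => ?_
  rw [posRpow_of_pos (hd i), posRpow_of_nonneg hs
    (mul_nonneg (sq_nonneg _) (Real.rpow_nonneg (hd i).le r))]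

theorem IsSVD.trPow_conj_matPow_perturbedWeights {X : Matrix n n ℂ} {V E : unitaryGroup n ℂ}
    {σ : n → ℝ} (h : IsSVD X V σ E) (hs : s ≠ 0) (ht : t ≠ 0) {ε : ℝ} (hε : 0 < ε) :
    trPow (X * matPow (diagConj E (perturbedWeights (fun i => (σ i ^ 2) ^ t) ε)) r * Xᴴ) s =
      (∑ i, (σ i ^ 2) ^ s * ((σ i ^ 2) ^ t + ε) ^ (r * s)) *
        (trPow (X * Xᴴ) t + Fintype.card n * ε) ^ (-(r * s)) := by
  have hw (i : n) : 0 ≤ (σ i ^ 2) ^ t := Real.rpow_nonneg (sq_nonneg _) _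
  rw [h.trPow_conj_matPow_diagConj (perturbedWeights_pos hw hε) hs, h.trPow_mul_conjTranspose ht,
    Finset.sum_mul]
  exact Finset.sum_congr rfl fun i _ => mul_perturbedWeights_rpow_rpow hw hε (sq_nonneg _) r s i

theorem trace_diagConj_perturbedWeights [Nonempty n] (E : unitaryGroup n ℂ) {w : n → ℝ}
    (hw : ∀ i, 0 ≤ w i) {ε : ℝ} (hε : 0 < ε) : (diagConj E (perturbedWeights w ε)).trace = 1 := by
  rw [trace_diagConj, sum_perturbedWeights hw hε, Complex.ofReal_one]

theorem exists_posDef_mul_rpow_le_trPow_conj_matPow [Nonempty n] (X : Matrix n n ℂ) (hs : s ≠ 0)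
    (ht : t ≠ 0) (hst : s + t * (r * s) = t) (hrs : 0 ≤ r * s) {ε : ℝ} (hε : 0 < ε) :
    ∃ C : Matrix n n ℂ, C.PosDef ∧ C.trace = 1 ∧
      trPow (X * Xᴴ) t * (trPow (X * Xᴴ) t + Fintype.card n * ε) ^ (-(r * s)) ≤
        trPow (X * matPow C r * Xᴴ) s := by
  obtain ⟨V, σ, E, hX⟩ := exists_isSVD X
  have hw (i : n) : 0 ≤ (σ i ^ 2) ^ t := Real.rpow_nonneg (sq_nonneg _) _
  refine ⟨diagConj E (perturbedWeights _ ε), posDef_diagConj E (perturbedWeights_pos hw hε),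
    trace_diagConj_perturbedWeights E hw hε, ?_⟩
  have hT := trPow_nonneg (X * Xᴴ) t
  rw [hX.trPow_conj_matPow_perturbedWeights hs ht hε]
  gcongr
  rw [hX.trPow_mul_conjTranspose ht]
  exact Finset.sum_le_sum fun i _ =>
    rpow_le_rpow_mul_add_rpow (sq_nonneg _) ht hst hrs hε.le

theorem exists_posDef_trPow_conj_matPow_le_mul_rpow [Nonempty n] (X : Matrix n n ℂ) (hs : s ≠ 0)
    (ht : t ≠ 0) (hst : s + t * (r * s) = t) (hrs : r * s ≤ 0) {ε : ℝ} (hε : 0 < ε) :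
    ∃ C : Matrix n n ℂ, C.PosDef ∧ C.trace = 1 ∧
      trPow (X * matPow C r * Xᴴ) s ≤
        trPow (X * Xᴴ) t * (trPow (X * Xᴴ) t + Fintype.card n * ε) ^ (-(r * s)) := by
  obtain ⟨V, σ, E, hX⟩ := exists_isSVD X
  have hw (i : n) : 0 ≤ (σ i ^ 2) ^ t := Real.rpow_nonneg (sq_nonneg _) _
  refine ⟨diagConj E (perturbedWeights _ ε), posDef_diagConj E (perturbedWeights_pos hw hε),
    trace_diagConj_perturbedWeights E hw hε, ?_⟩
  have hT := trPow_nonneg (X * Xᴴ) t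
  rw [hX.trPow_conj_matPow_perturbedWeights hs ht hε]
  gcongr
  rw [hX.trPow_mul_conjTranspose ht]
  exact Finset.sum_le_sum fun i _ =>
    rpow_mul_add_rpow_le_rpow (sq_nonneg _) hs ht hst hrs hε.le

theorem add_div_one_sub_mul_eq {u : ℝ} (hu : u < 1) (s : ℝ) :
    s + s / (1 - u) * u = s / (1 - u) := by
  linear_combination -div_mul_cancel₀ s (sub_pos.mpr hu).ne'

theorem isLUB_trPow_conj_matPow [Nonempty n] (X : Matrix n n ℂ) (hr : 0 < r) (hs : 0 < s)
    (hrs : r * s < 1) :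
    IsLUB {x | ∃ C : Matrix n n ℂ, IsDensity C ∧ x = trPow (X * matPow C r * Xᴴ) s}
      (trPow (X * Xᴴ) (s / (1 - r * s)) ^ (1 - r * s)) := by
  have ht : s / (1 - r * s) ≠ 0 := (div_pos hs (sub_pos.mpr hrs)).ne'
  constructor
  · rintro _ ⟨C, hC, rfl⟩
    exact trPow_conj_matPow_le_of_isDensity X hC hr hs hrs
  · intro x hx
    refine le_of_tendsto (tendsto_mul_add_mul_rpow_neg (trPow_nonneg _ _) hrs.ne (Fintype.card n))
      (eventually_nhdsWithin_of_forall fun ε hε => ?_)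
    obtain ⟨C, hC, htr, hle⟩ := exists_posDef_mul_rpow_le_trPow_conj_matPow X hs.ne' ht
      (add_div_one_sub_mul_eq hrs s) (mul_pos hr hs).le hε
    exact hle.trans (hx ⟨C, ⟨hC.posSemidef, htr⟩, rfl⟩)

theorem isGLB_trPow_conj_matPow [Nonempty n] (X : Matrix n n ℂ) (hr : r < 0) (hs : 0 < s) :
    IsGLB {x | ∃ C : Matrix n n ℂ, C.PosDef ∧ C.trace = 1 ∧ x = trPow (X * matPow C r * Xᴴ) s}
      (trPow (X * Xᴴ) (s / (1 - r * s)) ^ (1 - r * s)) := by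
  have hrs0 : r * s < 0 := mul_neg_of_neg_of_pos hr hs
  have hrs : r * s < 1 := hrs0.trans one_pos
  have ht : s / (1 - r * s) ≠ 0 := (div_pos hs (sub_pos.mpr hrs)).ne'
  constructor
  · rintro _ ⟨C, hC, htr, rfl⟩
    exact trPow_rpow_le_trPow_conj_matPow X hC htr hr hs
  · intro x hx
    refine ge_of_tendsto (tendsto_mul_add_mul_rpow_neg (trPow_nonneg _ _) hrs.ne (Fintype.card n))
      (eventually_nhdsWithin_of_forall fun ε hε => ?_)
    obtain ⟨C, hC, htr, hle⟩ := exists_posDef_trPow_conj_matPow_le_mul_rpow X hs.ne' ht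
      (add_div_one_sub_mul_eq hrs s) hrs0.le hε
    exact (hx ⟨C, hC, htr, rfl⟩).trans hle

theorem trPow_eq_zero_of_isEmpty [IsEmpty n] (M : Matrix n n ℂ) (t : ℝ) : trPow M t = 0 := by
  simp [trPow]

theorem sSup_trPow_conj_matPow (X : Matrix n n ℂ) (hr : 0 < r) (hs : 0 < s) (hrs : r * s < 1) :
    sSup {x | ∃ C : Matrix n n ℂ, IsDensity C ∧ x = trPow (X * matPow C r * Xᴴ) s} =
      trPow (X * Xᴴ) (s / (1 - r * s)) ^ (1 - r * s) := by
  rcases isEmpty_or_nonempty n with hn | hn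
  · simp [IsDensity, trPow_eq_zero_of_isEmpty, Real.zero_rpow (sub_pos.mpr hrs).ne']
  · have hlub := isLUB_trPow_conj_matPow X hr hs hrs
    exact hlub.csSup_eq hlub.nonempty

theorem sInf_trPow_conj_matPow (X : Matrix n n ℂ) (hr : r < 0) (hs : 0 < s) :
    sInf {x | ∃ C : Matrix n n ℂ, C.PosDef ∧ C.trace = 1 ∧
      x = trPow (X * matPow C r * Xᴴ) s} = trPow (X * Xᴴ) (s / (1 - r * s)) ^ (1 - r * s) := by
  rcases isEmpty_or_nonempty n with hn | hn
  · have hrs : 0 < 1 - r * s := by nlinarith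
    simp [trPow_eq_zero_of_isEmpty, Real.zero_rpow hrs.ne']
  · have hglb := isGLB_trPow_conj_matPow X hr hs
    exact hglb.csInf_eq hglb.nonempty

theorem stmt5_general (X : Matrix n n ℂ) (r s : ℝ) :
    ((0 < r ∧ 0 < s ∧ r * s < 1) →
      trPow (X * Xᴴ) (s / (1 - r * s)) =
        sSup {x | ∃ C : Matrix n n ℂ, IsDensity C ∧ x = trPow (X * matPow C r * Xᴴ) s}
          ^ (1 / (1 - r * s))) ∧
    ((r < 0 ∧ 0 < s) →
      trPow (X * Xᴴ) (s / (1 - r * s)) =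
        sInf {x | ∃ C : Matrix n n ℂ,
          C.PosDef ∧ C.trace = 1 ∧ x = trPow (X * matPow C r * Xᴴ) s} ^ (1 / (1 - r * s))) := by
  have hroot (hrs : r * s < 1) := Real.rpow_rpow_inv (trPow_nonneg (X * Xᴴ) (s / (1 - r * s)))
    (sub_pos.mpr hrs).ne'
  refine ⟨fun ⟨hr, hs, hrs⟩ => ?_, fun ⟨hr, hs⟩ => ?_⟩
  · rw [sSup_trPow_conj_matPow X hr hs hrs, one_div, hroot hrs]
  · rw [sInf_trPow_conj_matPow X hr hs, one_div, hroot (by nlinarith)]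

theorem matPow_mul_mul_matPow_mul_matPow (K A B : Matrix n n ℂ) (p q : ℝ) :
    matPow A (p / 2) * K * matPow B q * Kᴴ * matPow A (p / 2) =
      matPow A (p / 2) * K * matPow B (q / 2) * (matPow A (p / 2) * K * matPow B (q / 2))ᴴ := by
  rw [mul_matPow_half_mul_conjTranspose]
  simp only [conjTranspose_mul, conjTranspose_matPow, Matrix.mul_assoc]

theorem Phi5_eq_trPow (K : Matrix n n ℂ) (p q r s : ℝ) (A B C : Matrix n n ℂ) :
    Phi5 K p q r s A B C =
      trPow (matPow A (p / 2) * K * matPow B (q / 2) * matPow C r *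
        (matPow A (p / 2) * K * matPow B (q / 2))ᴴ) s := by
  simp only [Phi5, trPow, conjTranspose_mul, conjTranspose_matPow, Matrix.mul_assoc]

end VariationalFormula

/-- `Tr[(A^{p/2} K B^q K† A^{p/2})^{s/(1−rs)}] = (opt_C Φ(C))^{1/(1−rs)}`, where the
optimum is a supremum over density matrices in case (i) and an infimum over positive
definite density matrices in case (ii). -/
theorem stmt5 {n : Type*} [Fintype n] [DecidableEq n]
    (K : Matrix n n ℂ) (hK : IsUnit K) (p q r s : ℝ)
    (A B : Matrix n n ℂ) (hA : A.PosDef) (hB : B.PosDef) :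
    ((0 < r ∧ r ≤ 1 ∧ 0 < s ∧ s ≤ 1 / r ∧ r * s < 1) →
      (Matrix.trace (matPow
          (matPow A (p / 2) * K * matPow B q * Kᴴ * matPow A (p / 2))
          (s / (1 - r * s)))).re =
        (sSup {x | ∃ C : Matrix n n ℂ, IsDensity C ∧ x = Phi5 K p q r s A B C})
          ^ (1 / (1 - r * s))) ∧
    ((-1 ≤ r ∧ r < 0 ∧ 0 < s) →
      (Matrix.trace (matPow
          (matPow A (p / 2) * K * matPow B q * Kᴴ * matPow A (p / 2))
          (s / (1 - r * s)))).re =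
        (sInf {x | ∃ C : Matrix n n ℂ, C.PosDef ∧ C.trace = 1 ∧ x = Phi5 K p q r s A B C})
          ^ (1 / (1 - r * s))) := by
  simp only [Phi5_eq_trPow, matPow_mul_mul_matPow_mul_matPow]
  exact (stmt5_general _ r s).imp
    (fun h ⟨hr, _, hs, _, hrs⟩ => h ⟨hr, hs, hrs⟩)
    fun h hr => h hr.2
end
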